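/- arXiv:2511.01782 — 7 statements merged into one kernel-verified Lean document; each statement's English description precedes it below -/
import Mathlib

section
/- Let G be a finite abelian group whose order is not divisible by 2, 3, or 5, and let χ be a generalized character of G such that for every nonidentity element x of G the value χ(x) is a sum of at most two roots of unity. Then there exist an integer a, signs δ₁, δ₂ ∈ {−1, 0, 1}, and irreducible characters λ₁, λ₂ of G such that χ = a·ρ_G + δ₁·λ₁ + δ₂·λ₂ (as functions G → ℂ). -/
/-- A complex number is a root of unity. -/
def IsRootOfUnity (z : ℂ) : Prop := ∃ n : ℕ, 0 < n ∧ z ^ n = 1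

/-- A complex number is a sum of at most two roots of unity. -/
def IsSumAtMostTwoRootsOfUnity (z : ℂ) : Prop :=
  z = 0 ∨ IsRootOfUnity z ∨ ∃ u v : ℂ, IsRootOfUnity u ∧ IsRootOfUnity v ∧ z = u + v

/-!
Write `χ = ∑ φ, c φ • φ` and `N = |G|`. Since `ρ_G` vanishes off the identity, `χ` may be replaced
by `χ - a • ρ_G`, so it is enough to find `a` with `∑ φ, |c φ - a| ≤ 2`.

Fix `x ≠ 1` and let `χ x = u + v`. Splitting off the parts of `u` and `v` of order prime to `N`
gives `χ x = ω₁ η₁ + ω₂ η₂`, where the `ωⱼ` lie in `F = ℚ(ζ_b)` with `b` prime to `N`, and, after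
averaging over conjugates, the `ηⱼ` are `N`-th roots of unity. The `N`-th cyclotomic polynomial
stays irreducible over `F`, so a relation `∑ a_w w = 0` over `F` between `N`-th roots of unity
survives `w ↦ w ^ k` for `k` prime to `N`. By Vandermonde, fewer than `minFac N` of these roots
are linearly independent over `F`. Comparing coefficients, the `ℓ¹`-norm of a short combination
of characters with distinct values at `x` is at most `‖ω₁‖ + ‖ω₂‖ ≤ 2`.

If `N` is prime, all characters are separated by any `x ≠ 1`, and one of the `N` roots of unity can
be eliminated using `∑ φ, φ x = 0`. Otherwise `N ≥ 49`, and Parseval together with `‖χ x‖ ≤ 2` gives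
an `a` with `∑ φ, (c φ - a) ^ 2 ≤ 4`. So at most four characters have `c φ ≠ a`. The at most six
subgroups on which two of them agree do not cover `G`, because each has index at least `7`.
-/

open Finset Polynomial

theorem irreducible_cyclotomic_of_coprime {n b : ℕ} [NeZero n] [NeZero b] (F : Type*) [Field F]
    [Algebra ℚ F] [IsCyclotomicExtension {b} ℚ F] (h : n.Coprime b) :
    Irreducible (cyclotomic n F) := by
  have : CharZero F := algebraRat.charZero F
  let L := CyclotomicField n F
  have : FiniteDimensional ℚ F := IsCyclotomicExtension.finiteDimensional {b} ℚ F
  have : FiniteDimensional F L := IsCyclotomicExtension.finiteDimensional {n} F L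
  have : FiniteDimensional ℚ L := FiniteDimensional.trans ℚ F L
  have hζ := IsCyclotomicExtension.zeta_spec n F L
  have hξ : IsPrimitiveRoot (algebraMap F L (IsCyclotomicExtension.zeta b ℚ F)) b :=
    (IsCyclotomicExtension.zeta_spec b ℚ F).map_of_injective (algebraMap F L).injective
  have hmul : n.totient * b.totient ≤ Module.finrank F L * b.totient := by
    have hle := hζ.lcm_totient_le_finrank (K := ℚ) hξ
      (cyclotomic.irreducible_rat (Nat.lcm_pos (NeZero.pos n) (NeZero.pos b)))
    rwa [h.lcm_eq_mul, Nat.totient_mul h, ← Module.finrank_mul_finrank ℚ F L,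
      IsCyclotomicExtension.finrank F (cyclotomic.irreducible_rat (NeZero.pos b)),
      mul_comm b.totient] at hle
  have hdeg : n.totient ≤ (minpoly F (IsCyclotomicExtension.zeta n F L)).natDegree := by
    rw [← hζ.powerBasis_dim F, ← (hζ.powerBasis F).finrank]
    exact le_of_mul_le_mul_right hmul (Nat.totient_pos.2 (NeZero.pos b))
  have hint : IsIntegral F (IsCyclotomicExtension.zeta n F L) := .of_finite F _
  rw [eq_of_monic_of_dvd_of_natDegree_le (minpoly.monic hint) (cyclotomic.monic n F)
    (minpoly.dvd F _ (IsCyclotomicExtension.aeval_zeta n F L)) (by rwa [natDegree_cyclotomic])]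
  exact minpoly.irreducible hint

section Relations

variable {F K : Type*} [Field F] [Field K] [Algebra F K]

theorem sum_smul_pow_eq_zero {ι : Type*} {n k : ℕ} [NeZero (n : F)] {ζ : K}
    (hζ : IsPrimitiveRoot ζ n) (hirr : Irreducible (cyclotomic n F)) (hk : k.Coprime n)
    {s : Finset ι} {a : ι → F} {z : ι → K} (hz : ∀ i ∈ s, z i ^ n = 1)
    (h : ∑ i ∈ s, a i • z i = 0) : ∑ i ∈ s, a i • z i ^ k = 0 := by
  have : NeZero n := .of_neZero_natCast F
  choose! e he using fun i hi => hζ.eq_pow_of_pow_eq_one (hz i hi)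
  have haeval (w : K) : aeval w (∑ i ∈ s, C (a i) * X ^ e i) = ∑ i ∈ s, a i • w ^ e i := by
    simp [Algebra.smul_def]
  have hroot : aeval ζ (∑ i ∈ s, C (a i) * X ^ e i) = 0 := by
    rw [haeval, ← h]
    exact sum_congr rfl fun i hi => by rw [(he i hi).2]
  have hconj : aeval (ζ ^ k) (∑ i ∈ s, C (a i) * X ^ e i) = 0 := by
    refine aeval_eq_zero_of_dvd_aeval_eq_zero (minpoly.dvd F ζ hroot) ?_
    rw [← hζ.minpoly_eq_cyclotomic_of_irreducible hirr,
      (hζ.pow_of_coprime k hk).minpoly_eq_cyclotomic_of_irreducible hirr, minpoly.aeval]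
  rw [← hconj, haeval]
  refine sum_congr rfl fun i hi => ?_
  rw [← (he i hi).2, ← pow_mul, ← pow_mul, mul_comm]

theorem linearIndepOn_id_of_card_lt_minFac {n : ℕ} [NeZero (n : F)] {ζ : K}
    (hζ : IsPrimitiveRoot ζ n) (hirr : Irreducible (cyclotomic n F)) {t : Finset K}
    (ht : ∀ w ∈ t, w ^ n = 1) (hcard : #t < n.minFac) : LinearIndepOn F id (t : Set K) := by
  have : NeZero n := .of_neZero_natCast F
  rw [linearIndepOn_finset_iff]
  intro a ha w hw
  let v : Fin #t → K := fun j => t.equivFin.symm j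
  have hpow (k : Fin #t) : ∑ j, a (v j) • v j * v j ^ (k : ℕ) = 0 := by
    have hk : ((k : ℕ) + 1).Coprime n :=
      (Nat.coprime_of_lt_minFac k.1.succ_ne_zero (by omega)).symm
    rw [← sum_smul_pow_eq_zero hζ hirr hk ht ha, ← sum_coe_sort t]
    exact Fintype.sum_equiv t.equivFin.symm _ _ fun j => by simp [v, pow_succ']
  have hzero := congrFun (Matrix.eq_zero_of_forall_pow_sum_mul_pow_eq_zero
    (Subtype.val_injective.comp t.equivFin.symm.injective) hpow) (t.equivFin ⟨w, hw⟩)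
  have hw0 : w ≠ 0 := (IsUnit.of_pow_eq_one (ht w hw) (NeZero.ne n)).ne_zero
  simpa [v, hw0] using hzero

theorem sum_filter_pow_eq_one_smul_eq_zero {ι : Type*} [DecidableEq K] {n e : ℕ}
    [NeZero ((n ^ (e + 1) : ℕ) : F)] {ζ : K} (hζ : IsPrimitiveRoot ζ (n ^ (e + 1)))
    (hirr : Irreducible (cyclotomic (n ^ (e + 1)) F)) {s : Finset ι} {a : ι → F} {z : ι → K}
    (hz : ∀ i ∈ s, z i ^ n ^ (e + 1) = 1) (h : ∑ i ∈ s, a i • z i = 0) :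
    ∑ i ∈ s with z i ^ n = 1, a i • z i = 0 := by
  -- Average the conjugate relations over the exponents `k ≡ 1 [MOD n]`.
  have hgeom {w : K} (hw : w ^ n ^ (e + 1) = 1) :
      ∑ t ∈ range (n ^ e), w ^ (1 + n * t) = if w ^ n = 1 then n ^ e • w else 0 := by
    simp only [pow_add, pow_one, pow_mul, ← mul_sum]
    split_ifs with hwn
    · simp [hwn, mul_comm w]
    · rw [geom_sum_eq hwn, ← pow_mul, ← pow_succ', hw, sub_self, zero_div, mul_zero]
  have hconj (t : ℕ) : ∑ i ∈ s, a i • z i ^ (1 + n * t) = 0 :=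
    sum_smul_pow_eq_zero hζ hirr (Nat.Coprime.pow_right _ (by simp)) hz h
  have hscaled : n ^ e • ∑ i ∈ s with z i ^ n = 1, a i • z i = 0 := by
    rw [← sum_eq_zero fun t (_ : t ∈ range (n ^ e)) => hconj t, sum_comm, sum_filter, smul_sum]
    refine sum_congr rfl fun i hi => ?_
    rw [← smul_sum, hgeom (hz i hi)]
    split_ifs
    · exact smul_comm _ _ _
    · rw [smul_zero, smul_zero]
  rw [← Nat.cast_smul_eq_nsmul F] at hscaled
  refine (smul_eq_zero.1 hscaled).resolve_left fun h0 => NeZero.ne ((n ^ (e + 1) : ℕ) : F) ?_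
  rw [pow_succ, Nat.cast_mul, h0, zero_mul]

theorem sum_filter_smul_eq_sum_filter_smul {ι κ : Type*} [DecidableEq K] {n e : ℕ}
    [NeZero ((n ^ (e + 1) : ℕ) : F)] {ζ : K} (hζ : IsPrimitiveRoot ζ (n ^ (e + 1)))
    (hirr : Irreducible (cyclotomic (n ^ (e + 1)) F)) {s : Finset ι} {a : ι → F} {z : ι → K}
    (hz : ∀ i ∈ s, z i ^ n ^ (e + 1) = 1) {t : Finset κ} {b : κ → F} {y : κ → K}
    (hy : ∀ j ∈ t, y j ^ n ^ (e + 1) = 1) (h : ∑ i ∈ s, a i • z i = ∑ j ∈ t, b j • y j) :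
    ∑ i ∈ s with z i ^ n = 1, a i • z i = ∑ j ∈ t with y j ^ n = 1, b j • y j := by
  have hrel := sum_filter_pow_eq_one_smul_eq_zero hζ hirr (s := s.disjSum t)
    (a := Sum.elim a (-b)) (z := Sum.elim z y) ?_ ?_
  · rw [sum_filter, sum_disjSum] at hrel
    rw [← sub_eq_zero, sub_eq_add_neg, ← sum_neg_distrib, sum_filter, sum_filter]
    simp only [Sum.elim_inl, Sum.elim_inr, Pi.neg_apply, neg_smul] at hrel
    exact hrel
  · rintro (i | j) hx
    · exact hz i (inl_mem_disjSum.1 hx)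
    · exact hy j (inr_mem_disjSum.1 hx)
  · simp [sum_disjSum, h]

end Relations

theorem exists_mul_of_pow_mul_eq_one {M : Type*} [Monoid M] {a b : ℕ} (hab : a.Coprime b) {u : M}
    (hu : u ^ (a * b) = 1) : ∃ v w : M, v ^ a = 1 ∧ w ^ b = 1 ∧ u = v * w := by
  obtain ⟨k, hka, hkb⟩ := Nat.chineseRemainder hab 1 0
  obtain ⟨l, hla, hlb⟩ := Nat.chineseRemainder hab 0 1
  obtain ⟨x, rfl⟩ := Nat.modEq_zero_iff_dvd.1 hkb
  obtain ⟨y, rfl⟩ := Nat.modEq_zero_iff_dvd.1 hla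
  refine ⟨u ^ (b * x), u ^ (a * y), ?_, ?_, ?_⟩
  · rw [← pow_mul, show b * x * a = a * b * x by ring, pow_mul, hu, one_pow]
  · rw [← pow_mul, show a * y * b = a * b * y by ring, pow_mul, hu, one_pow]
  · have hsum : b * x + a * y ≡ 1 [MOD a * b] :=
      (Nat.modEq_and_modEq_iff_modEq_mul hab).1 ⟨hka.add hla, hkb.add hlb⟩
    rw [← pow_add, pow_eq_pow_of_modEq hsum hu, pow_one]

theorem exists_dvd_pow_mul_coprime (n : ℕ) {m : ℕ} (hm : m ≠ 0) :
    ∃ e b : ℕ, b ≠ 0 ∧ n.Coprime b ∧ m ∣ n ^ e * b := by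
  induction m using induction_on_primes with
  | zero => exact absurd rfl hm
  | one => exact ⟨0, 1, one_ne_zero, n.coprime_one_right, one_dvd _⟩
  | prime_mul p m hp ih =>
    obtain ⟨e, b, hb, hnb, hdvd⟩ := ih (right_ne_zero_of_mul hm)
    by_cases hpn : p ∣ n
    · refine ⟨e + 1, b, hb, hnb, ?_⟩
      rw [pow_succ', mul_assoc]
      exact mul_dvd_mul hpn hdvd
    · refine ⟨e, p * b, mul_ne_zero hp.ne_zero hb,
        ((hp.coprime_iff_not_dvd.2 hpn).symm).mul_right hnb, ?_⟩
      rw [mul_left_comm]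
      exact mul_dvd_mul_left p hdvd

open IntermediateField in
theorem exists_intermediateField_forall_eq_smul {n m : ℕ} (hn : n ≠ 0) (hm : m ≠ 0) :
    ∃ (e : ℕ) (F : IntermediateField ℚ ℂ), Irreducible (cyclotomic n F) ∧
      Irreducible (cyclotomic (n ^ (e + 1)) F) ∧
        ∀ u : ℂ, u ^ m = 1 → ∃ (ω : F) (η : ℂ), ‖ω‖ = 1 ∧ η ^ n ^ (e + 1) = 1 ∧ u = ω • η := by
  obtain ⟨e, b, hb, hnb, hmb⟩ := exists_dvd_pow_mul_coprime n hm
  have : NeZero n := ⟨hn⟩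
  have : NeZero b := ⟨hb⟩
  let F : IntermediateField ℚ ℂ := adjoin ℚ {x | ∃ k ∈ ({b} : Set ℕ), k ≠ 0 ∧ x ^ k = 1}
  have : IsCyclotomicExtension {b} ℚ F :=
    isCyclotomicExtension_adjoin_of_exists_isPrimitiveRoot {b} ℚ ℂ
      fun k _ hk => ⟨_, Complex.isPrimitiveRoot_exp k hk⟩
  refine ⟨e, F, irreducible_cyclotomic_of_coprime F hnb,
    irreducible_cyclotomic_of_coprime F (hnb.pow_left _), fun u hu => ?_⟩
  have hdvd : orderOf u ∣ n ^ (e + 1) * b :=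
    (orderOf_dvd_of_pow_eq_one hu).trans
      (hmb.trans (mul_dvd_mul_right (pow_dvd_pow n e.le_succ) b))
  obtain ⟨η, ω, hη, hω, huηω⟩ := exists_mul_of_pow_mul_eq_one (hnb.pow_left (e + 1))
    (orderOf_dvd_iff_pow_eq_one.1 hdvd)
  exact ⟨⟨ω, subset_adjoin ℚ _ ⟨b, rfl, hb, hω⟩⟩, η, Complex.norm_eq_one_of_pow_eq_one hω hb, hη,
    huηω.trans (mul_comm η ω)⟩

theorem exists_eq_sum_smul_of_eq_sum {ι κ : Type*} [Fintype κ] {n m : ℕ} (hn : n ≠ 0) (hm : m ≠ 0)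
    {s : Finset ι} {d : ι → ℤ} {z : ι → ℂ} (hz : ∀ i ∈ s, z i ^ n = 1) {u : κ → ℂ}
    (hu : ∀ j, u j ^ m = 1) (h : ∑ i ∈ s, d i * z i = ∑ j, u j) :
    ∃ F : IntermediateField ℚ ℂ, Irreducible (cyclotomic n F) ∧
      ∃ (ω : κ → F) (η : κ → ℂ), (∀ j, ‖ω j‖ ≤ 1) ∧ (∀ j, η j ^ n = 1) ∧
        ∑ i ∈ s, d i * z i = ∑ j, ω j • η j := by
  have : NeZero n := ⟨hn⟩
  obtain ⟨e, F, hirr, hirr_pow, hF⟩ := exists_intermediateField_forall_eq_smul hn hm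
  choose ω η hω hη huωη using fun j => hF (u j) (hu j)
  have hz' (i) (hi : i ∈ s) : z i ^ n ^ (e + 1) = 1 := by
    rw [pow_succ', pow_mul, hz i hi, one_pow]
  have hfilter := sum_filter_smul_eq_sum_filter_smul (a := fun i => (d i : F))
    (Complex.isPrimitiveRoot_exp (n ^ (e + 1)) (NeZero.ne _)) hirr_pow hz'
    (fun j (_ : j ∈ univ) => hη j) (by simpa only [Algebra.smul_def, map_intCast, huωη] using h)
  refine ⟨F, hirr, fun j => if η j ^ n = 1 then ω j else 0,
    fun j => if η j ^ n = 1 then η j else 1, fun j => ?_, fun j => ?_, ?_⟩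
  · dsimp only
    split_ifs
    · exact (hω j).le
    · exact norm_zero.trans_le zero_le_one
  · dsimp only
    split_ifs with hj
    · exact hj
    · exact one_pow n
  · simp only [filter_true_of_mem hz, sum_filter, Algebra.smul_def, map_intCast] at hfilter
    refine hfilter.trans (sum_congr rfl fun j _ => ?_)
    dsimp only
    split_ifs
    · rw [Algebra.smul_def]
    · rw [zero_smul]

theorem sum_abs_le_sum_norm {ι κ : Type*} [Fintype κ] {F : IntermediateField ℚ ℂ} {t : Finset ℂ}
    (ht : LinearIndepOn F id (t : Set ℂ)) {s : Finset ι} {d : ι → ℤ} {z : ι → ℂ}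
    (hinj : Set.InjOn z s) (hz : ∀ i ∈ s, z i ∈ t) {ω : κ → F} {η : κ → ℂ} (hη : ∀ j, η j ∈ t)
    (h : ∑ i ∈ s, d i * z i = ∑ j, ω j • η j) : (∑ i ∈ s, |d i| : ℤ) ≤ ∑ j, ‖ω j‖ := by
  classical
  have hcoeff : ∀ w ∈ t, ∑ i ∈ s with z i = w, (d i : F) = ∑ j with η j = w, ω j := by
    refine linearIndepOn_finset_iffₛ.1 ht _ _ ?_
    calc ∑ w ∈ t, (∑ i ∈ s with z i = w, (d i : F)) • w
        = ∑ w ∈ t, ∑ i ∈ s with z i = w, d i * z i := by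
          refine sum_congr rfl fun w _ => ?_
          rw [sum_smul]
          refine sum_congr rfl fun i hi => ?_
          rw [(mem_filter.1 hi).2, Algebra.smul_def, map_intCast]
      _ = ∑ w ∈ t, ∑ j with η j = w, ω j • η j := by
          rw [sum_fiberwise_of_maps_to hz, h, sum_fiberwise_of_maps_to fun j _ => hη j]
      _ = ∑ w ∈ t, (∑ j with η j = w, ω j) • w := by
          refine sum_congr rfl fun w _ => ?_
          rw [sum_smul]
          exact sum_congr rfl fun j hj => by rw [(mem_filter.1 hj).2]
  have hd : ∀ i ∈ s, (|d i| : ℝ) ≤ ∑ j with η j = z i, ‖ω j‖ := by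
    intro i hi
    have hfib : {i' ∈ s | z i' = z i} = {i} := by
      ext i'
      simp only [mem_filter, mem_singleton]
      exact ⟨fun hi' => hinj hi'.1 hi hi'.2, by rintro rfl; exact ⟨hi, rfl⟩⟩
    have hdi := hcoeff (z i) (hz i hi)
    rw [hfib, sum_singleton] at hdi
    calc (|d i| : ℝ) = ‖(d i : F)‖ := (Complex.norm_intCast _).symm
      _ ≤ _ := hdi ▸ norm_sum_le _ _
  push_cast
  calc ∑ i ∈ s, (|d i| : ℝ) ≤ ∑ i ∈ s, ∑ j with η j = z i, ‖ω j‖ := sum_le_sum hd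
    _ = ∑ w ∈ s.image z, ∑ j with η j = w, ‖ω j‖ := by rw [sum_image hinj]
    _ ≤ ∑ j, ‖ω j‖ := sum_fiberwise_le_sum_of_sum_fiber_nonneg fun w _ =>
      sum_nonneg fun j _ => norm_nonneg _

theorem IsSumAtMostTwoRootsOfUnity.exists_eq_sum {z : ℂ} (hz : IsSumAtMostTwoRootsOfUnity z) :
    ∃ (m : ℕ) (u : Fin 2 → ℂ), m ≠ 0 ∧ (∀ j, u j ^ m = 1) ∧ z = ∑ j, u j := by
  suffices ∃ u v : ℂ, IsRootOfUnity u ∧ IsRootOfUnity v ∧ z = u + v by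
    obtain ⟨u, v, ⟨k, hk, hu⟩, ⟨l, hl, hv⟩, rfl⟩ := this
    refine ⟨k * l, ![u, v], (Nat.mul_pos hk hl).ne', fun j => ?_, by simp⟩
    fin_cases j
    · simp [pow_mul, hu]
    · simp [pow_mul', hv]
  rcases hz with rfl | ⟨k, hk, hu⟩ | h
  · exact ⟨1, -1, ⟨1, one_pos, one_pow 1⟩, ⟨2, two_pos, by norm_num⟩, by ring⟩
  · have hω := Complex.isPrimitiveRoot_exp 3 three_ne_zero
    have hsum := hω.geom_sum_eq_zero (by norm_num)
    generalize Complex.exp _ = ω at hω hsum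
    have hneg {x : ℂ} (hx : x ^ 3 = 1) : IsRootOfUnity (-(x * z)) := by
      refine ⟨6 * k, by positivity, ?_⟩
      rw [neg_pow, mul_pow, pow_mul' z, hu, pow_mul x, show x ^ 6 = (x ^ 3) ^ 2 by ring, hx]
      norm_num [pow_mul]
    -- `1 + ω + ω ^ 2 = 0` for a primitive cube root of unity `ω`.
    refine ⟨-(ω * z), -(ω ^ 2 * z), hneg hω.pow_eq_one, hneg ?_, ?_⟩
    · rw [pow_right_comm, hω.pow_eq_one, one_pow]
    · simp only [sum_range_succ, sum_range_zero] at hsum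
      linear_combination z * hsum
  · exact h

theorem IsSumAtMostTwoRootsOfUnity.norm_le_two {z : ℂ} (hz : IsSumAtMostTwoRootsOfUnity z) :
    ‖z‖ ≤ 2 := by
  obtain ⟨m, u, hm, hu, rfl⟩ := hz.exists_eq_sum
  refine (norm_sum_le _ _).trans_eq ?_
  simp [Complex.norm_eq_one_of_pow_eq_one (hu _) hm]

theorem IsSumAtMostTwoRootsOfUnity.sum_abs_le_two {ι : Type*} {n : ℕ} {s : Finset ι} {d : ι → ℤ}
    {z : ι → ℂ} (h : IsSumAtMostTwoRootsOfUnity (∑ i ∈ s, d i * z i)) (hz : ∀ i ∈ s, z i ^ n = 1)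
    (hinj : Set.InjOn z s) (hcard : #s + 2 < n.minFac) : ∑ i ∈ s, |d i| ≤ 2 := by
  classical
  have hn : n ≠ 0 := by rintro rfl; simp at hcard
  have : NeZero n := ⟨hn⟩
  obtain ⟨m, u, hm, hu, hsum⟩ := h.exists_eq_sum
  obtain ⟨F, hirr, ω, η, hω, hη, hsum⟩ := exists_eq_sum_smul_of_eq_sum hn hm hz hu hsum
  have ht : ∀ w ∈ s.image z ∪ univ.image η, w ^ n = 1 := by
    simp only [mem_union, mem_image, mem_univ, true_and]
    rintro w (⟨i, hi, rfl⟩ | ⟨j, rfl⟩)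
    exacts [hz i hi, hη j]
  have ht_card : #(s.image z ∪ univ.image η) < n.minFac :=
    ((card_union_le _ _).trans (add_le_add card_image_le card_image_le)).trans_lt (by simpa)
  have hbound := sum_abs_le_sum_norm
    (linearIndepOn_id_of_card_lt_minFac (Complex.isPrimitiveRoot_exp n hn) hirr ht ht_card) hinj
    (fun i hi => mem_union_left _ (mem_image_of_mem z hi))
    (fun j => mem_union_right _ (mem_image_of_mem η (mem_univ j))) hsum
  have hω_sum : ∑ j, ‖ω j‖ ≤ 2 := (sum_le_sum fun j _ => hω j).trans_eq (by simp)
  exact_mod_cast hbound.trans hω_sum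

theorem IsSumAtMostTwoRootsOfUnity.exists_sum_abs_sub_le_two {ι : Type*} [Fintype ι] {p : ℕ}
    (hp : p.Prime) {c : ι → ℤ} {z : ι → ℂ} (h : IsSumAtMostTwoRootsOfUnity (∑ i, c i * z i))
    (hz : ∀ i, z i ^ p = 1) (hinj : Function.Injective z) (hz_sum : ∑ i, z i = 0)
    (hcard : 2 < Fintype.card ι) : ∃ a : ℤ, ∑ i, |c i - a| ≤ 2 := by
  classical
  have : NeZero p := ⟨hp.ne_zero⟩
  obtain ⟨m, u, hm, hu, hsum⟩ := h.exists_eq_sum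
  obtain ⟨F, hirr, ω, η, hω, hη, hsum⟩ :=
    exists_eq_sum_smul_of_eq_sum hp.ne_zero hm (fun i _ => hz i) hu hsum
  obtain ⟨i₀, hi₀⟩ : ∃ i₀, ∀ j, η j ≠ z i₀ := by
    by_contra! hsurj
    choose j hj using hsurj
    have hj_inj : Function.Injective j := fun i i' hii' => hinj (by rw [← hj, ← hj, hii'])
    exact (Fintype.card_le_of_injective j hj_inj).not_gt (by simpa)
  have ht_mem (w : ℂ) (hw : w ^ p = 1) (hne : w ≠ z i₀) :
      w ∈ (nthRootsFinset p (1 : ℂ)).erase (z i₀) :=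
    mem_erase.2 ⟨hne, (mem_nthRootsFinset hp.pos _).2 hw⟩
  have ht (w) (hw : w ∈ (nthRootsFinset p (1 : ℂ)).erase (z i₀)) : w ^ p = 1 :=
    (mem_nthRootsFinset hp.pos _).1 (mem_of_mem_erase hw)
  have hζ := Complex.isPrimitiveRoot_exp p hp.ne_zero
  have ht_card : #((nthRootsFinset p (1 : ℂ)).erase (z i₀)) < p.minFac := by
    rw [hp.minFac_eq, card_erase_of_mem ((mem_nthRootsFinset hp.pos _).2 (hz i₀)),
      hζ.card_nthRootsFinset]
    exact Nat.sub_one_lt hp.ne_zero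
  have hshift : ∑ i ∈ univ.erase i₀, ((c i - c i₀ : ℤ) : ℂ) * z i = ∑ j, ω j • η j := by
    rw [← hsum, sum_erase _ (by simp)]
    simp [sub_mul, ← mul_sum, hz_sum]
  have hbound := sum_abs_le_sum_norm (linearIndepOn_id_of_card_lt_minFac hζ hirr ht ht_card)
    hinj.injOn (fun i hi => ht_mem _ (hz i) (hinj.ne (ne_of_mem_erase hi)))
    (fun j => ht_mem _ (hη j) (hi₀ j)) hshift
  have hω_sum : ∑ j, ‖ω j‖ ≤ 2 := (sum_le_sum fun j _ => hω j).trans_eq (by simp)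
  refine ⟨c i₀, ?_⟩
  rw [← sum_erase univ (a := i₀) (by simp)]
  exact_mod_cast hbound.trans hω_sum

theorem sum_sum_sub_sq {ι R : Type*} [Fintype ι] [CommRing R] (c : ι → R) :
    ∑ i, ∑ j, (c j - c i) ^ 2 = 2 * (Fintype.card ι * ∑ i, c i ^ 2 - (∑ i, c i) ^ 2) := by
  simp only [sub_sq', sum_sub_distrib, sum_add_distrib, ← mul_sum, ← sum_mul, sum_const, card_univ,
    nsmul_eq_mul]
  ring

theorem exists_sum_sub_sq_le {ι : Type*} [Fintype ι] {c : ι → ℤ} {K : ℤ} (hK : 0 ≤ K)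
    (hcard : K ^ 2 + K + 1 < Fintype.card ι)
    (h : Fintype.card ι * ∑ i, c i ^ 2 - (∑ i, c i) ^ 2 ≤ K * (Fintype.card ι - 1)) :
    ∃ a : ℤ, ∑ i, (c i - a) ^ 2 ≤ K := by
  obtain ⟨i, -, hi⟩ : ∃ i ∈ univ, ∑ j, (c j - c i) ^ 2 < 2 * K + 1 := by
    refine exists_lt_of_sum_lt ?_
    rw [sum_sum_sub_sq, sum_const, card_univ, nsmul_eq_mul]
    linarith [sq_nonneg K]
  refine ⟨c i, ?_⟩
  have hvar : Fintype.card ι * ∑ j, (c j - c i) ^ 2 - (∑ j, (c j - c i)) ^ 2 ≤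
      K * (Fintype.card ι - 1) := by
    refine le_of_eq_of_le ?_ h
    simp only [sub_sq, sum_sub_distrib, sum_add_distrib, ← mul_sum, ← sum_mul, sum_const,
      card_univ, nsmul_eq_mul]
    ring
  have hsq : (∑ j, (c j - c i)) ^ 2 ≤ (∑ j, (c j - c i) ^ 2) ^ 2 := by
    refine sq_le_sq.2 ((abs_sum_le_sum_abs _ _).trans ((sum_le_sum fun j _ => ?_).trans
      (le_abs_self _)))
    rw [← sq_abs]
    exact Int.le_self_sq _
  generalize ∑ j, (c j - c i) ^ 2 = Q at *
  by_contra! hQ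
  -- `Q ^ 2 - card ι * Q + K * (card ι - 1)` is convex in `Q` and negative at `K + 1` and `2 * K`.
  have hQ_sub : 0 ≤ Q - K - 1 := by linarith
  nlinarith [mul_nonneg hQ_sub (show 0 ≤ 2 * K - Q by linarith),
    mul_nonneg hQ_sub (show 0 ≤ Fintype.card ι - (K ^ 2 + K + 2) by linarith),
    mul_nonneg hQ_sub (sq_nonneg (K - 1))]

theorem exists_eq_sum_single {ι : Type*} [Fintype ι] [DecidableEq ι] [Nonempty ι] {n : ℕ}
    {d : ι → ℤ} (h : ∑ i, |d i| ≤ n) :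
    ∃ (δ : Fin n → ℤ) (i : Fin n → ι), (∀ k, δ k ∈ ({-1, 0, 1} : Set ℤ)) ∧
      d = ∑ k, Pi.single (i k) (δ k) := by
  induction n generalizing d with
  | zero =>
    refine ⟨0, Fin.elim0, fun k => k.elim0, ?_⟩
    have h0 : ∑ i, |d i| = 0 := le_antisymm h (sum_nonneg fun i _ => abs_nonneg _)
    ext i
    simpa using (sum_eq_zero_iff_of_nonneg fun i _ => abs_nonneg _).1 h0 i (mem_univ i)
  | succ n ih =>
    suffices ∃ (ε : ℤ) (i₀ : ι), ε ∈ ({-1, 0, 1} : Set ℤ) ∧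
        ∑ i, |(d - Pi.single i₀ ε : ι → ℤ) i| ≤ n by
      obtain ⟨ε, i₀, hε, hd⟩ := this
      obtain ⟨δ, i, hδ, hsum⟩ := ih hd
      refine ⟨Fin.cons ε δ, Fin.cons i₀ i, Fin.cases hε hδ, ?_⟩
      simp only [Fin.sum_univ_succ, Fin.cons_zero, Fin.cons_succ, ← hsum, add_sub_cancel]
    by_cases hd : d = 0
    · exact ⟨0, Classical.arbitrary ι, by simp, by simp [hd]⟩
    obtain ⟨i₀, hi₀ : d i₀ ≠ 0⟩ := Function.ne_iff.1 hd
    refine ⟨(d i₀).sign, i₀, ?_, ?_⟩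
    · rcases Int.sign_trichotomy (d i₀) with hs | hs | hs <;> simp [hs]
    · have habs (i : ι) : |(d - Pi.single i₀ (d i₀).sign : ι → ℤ) i| =
          |d i| - (Pi.single i₀ 1 : ι → ℤ) i := by
        obtain rfl | hi := eq_or_ne i i₀
        · simp only [Pi.sub_apply, Pi.single_eq_same]
          rcases lt_or_gt_of_ne hi₀ with hneg | hpos
          · rw [Int.sign_eq_neg_one_of_neg hneg, abs_of_neg hneg, abs_of_nonpos (by omega)]
            ring
          · rw [Int.sign_eq_one_of_pos hpos, abs_of_pos hpos, abs_of_nonneg (by omega)]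
        · simp [hi]
      simp only [habs, sum_sub_distrib, sum_pi_single', mem_univ, if_true]
      push_cast at h
      linarith

theorem exists_forall_notMem_of_card_lt_minFac {G ι : Type*} [Group G] [Finite G] {s : Finset ι}
    {H : ι → Subgroup G} (hH : ∀ i ∈ s, H i ≠ ⊤) (hs : #s < (Nat.card G).minFac) :
    ∃ x, ∀ i ∈ s, x ∉ H i := by
  by_contra! hcover
  obtain ⟨i, hi, -, hindex⟩ : ∃ i ∈ s, (H i).FiniteIndex ∧ (H i).index ≤ #s := by
    refine Subgroup.exists_index_le_card_of_leftCoset_cover (g := 1) ?_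
    simpa [Set.eq_univ_iff_forall] using hcover
  have hne : (H i).index ≠ 1 := fun h => hH i hi (Subgroup.index_eq_one.1 h)
  exact (Nat.minFac_le_of_dvd ((Nat.two_le_iff _).2 ⟨Subgroup.FiniteIndex.index_ne_zero, hne⟩)
    (H i).index_dvd_card).not_gt (hindex.trans_lt hs)

theorem exists_ne_one_injOn_eval {G M : Type*} [Group G] [Finite G] [Nontrivial G] [Group M]
    {s : Finset (G →* M)} (hs : (#s).choose 2 < (Nat.card G).minFac) :
    ∃ x ≠ 1, Set.InjOn (fun φ : G →* M => φ x) s := by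
  rcases (s : Set (G →* M)).subsingleton_or_nontrivial with hsub | ⟨φ₀, hφ₀, ψ₀, hψ₀, hne⟩
  · obtain ⟨x, hx⟩ := exists_ne (1 : G)
    exact ⟨x, hx, hsub.injOn _⟩
  let H (t : Finset (G →* M)) : Subgroup G := ⨅ φ ∈ t, ⨅ ψ ∈ t, φ.eqLocus ψ
  have hH (t : Finset (G →* M)) (x : G) : x ∈ H t ↔ ∀ φ ∈ t, ∀ ψ ∈ t, φ x = ψ x := by
    simp only [H, Subgroup.mem_iInf]
    rfl
  have hH_top : ∀ t ∈ s.powersetCard 2, H t ≠ ⊤ := by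
    intro t ht htop
    obtain ⟨φ, hφ, ψ, hψ, hne⟩ := one_lt_card.1 ((mem_powersetCard.1 ht).2 ▸ one_lt_two)
    exact hne (MonoidHom.ext fun x => (hH t x).1 (htop ▸ Subgroup.mem_top x) φ hφ ψ hψ)
  obtain ⟨x, hx⟩ := exists_forall_notMem_of_card_lt_minFac hH_top (by rwa [card_powersetCard])
  have hinj : Set.InjOn (fun φ : G →* M => φ x) s := by
    classical
    intro φ hφ ψ hψ heq
    by_contra hne
    refine hx {φ, ψ} (mem_powersetCard.2 ⟨by simp_all [insert_subset_iff], card_pair hne⟩) ?_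
    simp_all
  refine ⟨x, ?_, hinj⟩
  rintro rfl
  exact hne (hinj hφ₀ hψ₀ (by simp))

theorem seven_le_minFac {n : ℕ} (hn : n ≠ 1) (h2 : ¬2 ∣ n) (h3 : ¬3 ∣ n) (h5 : ¬5 ∣ n) :
    7 ≤ n.minFac := by
  have hp := Nat.minFac_prime hn
  have hdvd := Nat.minFac_dvd n
  by_contra! hlt
  generalize n.minFac = p at *
  interval_cases p <;> contradiction

section Characters

variable {G : Type*} [CommGroup G] [Fintype G]

theorem monoidHom_units_pow_card (φ : G →* ℂˣ) (x : G) : (φ x : ℂ) ^ Fintype.card G = 1 := by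
  rw [← Units.val_pow_eq_pow_val, ← map_pow, pow_card_eq_one, map_one, Units.val_one]

theorem sum_mul_conj_monoidHom_units [DecidableEq (G →* ℂˣ)] (φ ψ : G →* ℂˣ) :
    ∑ x, (φ x : ℂ) * starRingEnd ℂ (ψ x) = if φ = ψ then (Fintype.card G : ℂ) else 0 := by
  classical
  have hconj (x : G) : starRingEnd ℂ (ψ x) = ((ψ x)⁻¹ : ℂˣ) := by
    rw [Units.val_inv_eq_inv_val, Complex.inv_eq_conj]
    exact Complex.norm_eq_one_of_pow_eq_one (monoidHom_units_pow_card ψ x) Fintype.card_ne_zero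
  have htriv : (Units.coeHom ℂ).comp (φ / ψ) = 1 ↔ φ = ψ := by
    simp [MonoidHom.ext_iff, div_eq_one_iff_eq, Units.ext_iff]
  have hsum := sum_hom_units ((Units.coeHom ℂ).comp (φ / ψ))
  simpa [htriv, hconj, div_eq_mul_inv] using hsum

variable [Fintype (G →* ℂˣ)]

theorem card_monoidHom_units : Fintype.card (G →* ℂˣ) = Fintype.card G := by
  rw [← Nat.card_eq_fintype_card, ← Nat.card_eq_fintype_card]
  exact CommGroup.card_monoidHom_of_hasEnoughRootsOfUnity G ℂ

theorem sum_monoidHom_units_apply [DecidableEq G] (x : G) :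
    ∑ φ : G →* ℂˣ, (φ x : ℂ) = if x = 1 then (Fintype.card G : ℂ) else 0 := by
  classical
  have htriv : (Units.coeHom ℂ).comp (MonoidHom.eval x) = 1 ↔ x = 1 := by
    rw [← CommGroup.forall_apply_eq_apply_iff G (M := ℂ)]
    simp [MonoidHom.ext_iff]
  simpa [htriv, card_monoidHom_units] using sum_hom_units ((Units.coeHom ℂ).comp (MonoidHom.eval x))

theorem sum_norm_sum_mul_sq (c : (G →* ℂˣ) → ℂ) :
    ∑ x : G, ‖∑ φ, c φ * φ x‖ ^ 2 = Fintype.card G * ∑ φ, ‖c φ‖ ^ 2 := by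
  classical
  have hcomplex : ∑ x : G, (∑ φ, c φ * φ x) * starRingEnd ℂ (∑ ψ, c ψ * ψ x) =
      Fintype.card G * ∑ φ, c φ * starRingEnd ℂ (c φ) := by
    calc ∑ x : G, (∑ φ, c φ * φ x) * starRingEnd ℂ (∑ ψ, c ψ * ψ x)
        = ∑ φ, ∑ ψ, c φ * starRingEnd ℂ (c ψ) * ∑ x, φ x * starRingEnd ℂ (ψ x) := by
          simp_rw [map_sum, map_mul, sum_mul_sum, mul_sum]
          rw [sum_comm]
          refine sum_congr rfl fun φ _ => ?_
          rw [sum_comm]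
          exact sum_congr rfl fun ψ _ => sum_congr rfl fun x _ => mul_mul_mul_comm _ _ _ _
      _ = Fintype.card G * ∑ φ, c φ * starRingEnd ℂ (c φ) := by
          simp [sum_mul_conj_monoidHom_units, mul_sum, mul_comm]
  simp only [Complex.mul_conj'] at hcomplex
  exact_mod_cast hcomplex

theorem card_mul_sum_sq_sub_sq_sum_le {c : (G →* ℂˣ) → ℤ} {K : ℤ}
    (h : ∀ x : G, x ≠ 1 → ‖∑ φ, (c φ : ℂ) * φ x‖ ^ 2 ≤ K) :
    Fintype.card G * ∑ φ, c φ ^ 2 - (∑ φ, c φ) ^ 2 ≤ K * (Fintype.card G - 1) := by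
  classical
  have hone : ‖∑ φ : G →* ℂˣ, (c φ : ℂ) * (φ 1 : ℂˣ)‖ ^ 2 = (∑ φ, (c φ : ℝ)) ^ 2 := by
    simp only [map_one, Units.val_one, mul_one]
    rw [← Int.cast_sum, Complex.norm_intCast, sq_abs, Int.cast_sum]
  have hne : ∑ x ∈ univ.erase (1 : G), ‖∑ φ, (c φ : ℂ) * φ x‖ ^ 2 ≤ (Fintype.card G - 1) * K := by
    refine (sum_le_card_nsmul _ _ _ fun x hx => h x (ne_of_mem_erase hx)).trans_eq ?_
    simp [card_erase_of_mem, Nat.cast_sub Fintype.card_pos]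
  have hparseval := sum_norm_sum_mul_sq fun φ : G →* ℂˣ => (c φ : ℂ)
  rw [← add_sum_erase _ _ (mem_univ (1 : G)), hone] at hparseval
  simp only [Complex.norm_intCast, sq_abs] at hparseval
  have hreal : Fintype.card G * ∑ φ, (c φ : ℝ) ^ 2 - (∑ φ, (c φ : ℝ)) ^ 2 ≤
      K * (Fintype.card G - 1) := by
    linarith
  exact_mod_cast hreal

theorem exists_sum_abs_sub_le_two_of_prime_card (hG : (Fintype.card G).Prime)
    (hG_two : Fintype.card G ≠ 2) {c : (G →* ℂˣ) → ℤ}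
    (h : ∀ x : G, x ≠ 1 → IsSumAtMostTwoRootsOfUnity (∑ φ, (c φ : ℂ) * φ x)) :
    ∃ a : ℤ, ∑ φ, |c φ - a| ≤ 2 := by
  classical
  have : Fact (Fintype.card G).Prime := ⟨hG⟩
  have : Nontrivial G := Fintype.one_lt_card_iff_nontrivial.1 hG.one_lt
  obtain ⟨x, hx⟩ := exists_ne (1 : G)
  have hinj : Function.Injective fun φ : G →* ℂˣ => (φ x : ℂ) := by
    intro φ ψ hφψ
    ext y
    obtain ⟨k, rfl⟩ := mem_powers_of_prime_card (Nat.card_eq_fintype_card (α := G)) hx (g' := y)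
    simpa using congrArg (· ^ k) hφψ
  refine (h x hx).exists_sum_abs_sub_le_two hG (monoidHom_units_pow_card · x) hinj ?_ ?_
  · rw [sum_monoidHom_units_apply, if_neg hx]
  · exact card_monoidHom_units (G := G) ▸ hG.two_le.lt_of_ne' hG_two

theorem exists_sum_sub_sq_le_four (hG : 21 < Fintype.card G) {c : (G →* ℂˣ) → ℤ}
    (h : ∀ x : G, x ≠ 1 → IsSumAtMostTwoRootsOfUnity (∑ φ, (c φ : ℂ) * φ x)) :
    ∃ a : ℤ, ∑ φ, (c φ - a) ^ 2 ≤ 4 := by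
  rw [← card_monoidHom_units] at hG
  refine exists_sum_sub_sq_le (by norm_num) (by exact_mod_cast hG) ?_
  rw [card_monoidHom_units]
  refine card_mul_sum_sq_sub_sq_sum_le fun x hx => ?_
  calc ‖∑ φ, (c φ : ℂ) * φ x‖ ^ 2 ≤ 2 ^ 2 := by gcongr; exact (h x hx).norm_le_two
    _ = ((4 : ℤ) : ℝ) := by norm_num

theorem exists_sum_abs_sub_le_two_of_lt_card (hG : 21 < Fintype.card G)
    (hG_minFac : 7 ≤ (Fintype.card G).minFac) {c : (G →* ℂˣ) → ℤ}
    (h : ∀ x : G, x ≠ 1 → IsSumAtMostTwoRootsOfUnity (∑ φ, (c φ : ℂ) * φ x)) :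
    ∃ a : ℤ, ∑ φ, |c φ - a| ≤ 2 := by
  classical
  have : Nontrivial G := Fintype.one_lt_card_iff_nontrivial.1 (by omega)
  obtain ⟨a, ha⟩ := exists_sum_sub_sq_le_four hG h
  let s : Finset (G →* ℂˣ) := {φ | c φ ≠ a}
  have hs_compl {φ} (hφ : φ ∉ s) : c φ - a = 0 := by simpa [s, sub_eq_zero] using hφ
  have hs_card : #s ≤ 4 := by
    have hone : ∀ φ ∈ s, 1 ≤ (c φ - a) ^ 2 := fun φ hφ =>
      Order.one_le_iff_pos.2 (sq_pos_of_ne_zero (sub_ne_zero.2 (mem_filter.1 hφ).2))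
    have hle := (card_nsmul_le_sum s _ 1 hone).trans
      (sum_le_univ_sum_of_nonneg fun φ => sq_nonneg (c φ - a))
    rw [nsmul_one] at hle
    exact_mod_cast hle.trans ha
  have hs_choose : (#s).choose 2 < (Nat.card G).minFac := by
    rw [Nat.card_eq_fintype_card]
    exact (Nat.choose_le_choose 2 hs_card).trans_lt (hG_minFac.trans_lt' (by decide))
  obtain ⟨x, hx, hinj⟩ := exists_ne_one_injOn_eval hs_choose
  have hval : ∑ φ ∈ s, ((c φ - a : ℤ) : ℂ) * φ x = ∑ φ, (c φ : ℂ) * φ x := by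
    rw [sum_subset (subset_univ s) fun φ _ hφ => by rw [hs_compl hφ, Int.cast_zero, zero_mul]]
    simp [sub_mul, ← mul_sum, sum_monoidHom_units_apply, hx]
  refine ⟨a, ?_⟩
  rw [← sum_subset (subset_univ s) fun φ _ hφ => by rw [hs_compl hφ, abs_zero]]
  exact (hval ▸ h x hx).sum_abs_le_two (fun φ _ => monoidHom_units_pow_card φ x)
    (Units.val_injective.comp_injOn hinj) (by omega)

theorem exists_sum_abs_sub_le_two (h2 : ¬2 ∣ Fintype.card G) (h3 : ¬3 ∣ Fintype.card G)
    (h5 : ¬5 ∣ Fintype.card G) {c : (G →* ℂˣ) → ℤ}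
    (h : ∀ x : G, x ≠ 1 → IsSumAtMostTwoRootsOfUnity (∑ φ, (c φ : ℂ) * φ x)) :
    ∃ a : ℤ, ∑ φ, |c φ - a| ≤ 2 := by
  by_cases hone : Fintype.card G = 1
  · have : Subsingleton (G →* ℂˣ) :=
      Fintype.card_le_one_iff_subsingleton.1 (card_monoidHom_units.trans hone).le
    refine ⟨c 1, (sum_eq_zero fun φ _ => ?_).trans_le zero_le_two⟩
    rw [Subsingleton.elim φ 1, sub_self, abs_zero]
  have hminFac : 7 ≤ (Fintype.card G).minFac := seven_le_minFac hone h2 h3 h5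
  by_cases hprime : (Fintype.card G).Prime
  · exact exists_sum_abs_sub_le_two_of_prime_card hprime (by rintro h; simp [h] at h2) h
  · refine exists_sum_abs_sub_le_two_of_lt_card ?_ hminFac h
    calc 21 < 7 ^ 2 := by norm_num
      _ ≤ (Fintype.card G).minFac ^ 2 := by gcongr
      _ ≤ Fintype.card G := Nat.minFac_sq_le_self Fintype.card_pos hprime

end Characters

theorem stmt_0 {G : Type*} [CommGroup G] [Fintype G] [DecidableEq G]
    (h2 : ¬ (2 ∣ Fintype.card G)) (h3 : ¬ (3 ∣ Fintype.card G)) (h5 : ¬ (5 ∣ Fintype.card G))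
    (χ : G → ℂ)
    -- χ is a generalized character of G: a ℤ-linear combination of irreducible characters
    (hgen : ∃ c : (G →* ℂˣ) →₀ ℤ, ∀ g : G, χ g = c.sum fun lam n => (n : ℂ) * (lam g : ℂ))
    -- values on nonidentity elements are sums of at most two roots of unity
    (hval : ∀ x : G, x ≠ 1 → IsSumAtMostTwoRootsOfUnity (χ x)) :
    ∃ (a δ₁ δ₂ : ℤ) (lam₁ lam₂ : G →* ℂˣ),
      δ₁ ∈ ({-1, 0, 1} : Set ℤ) ∧ δ₂ ∈ ({-1, 0, 1} : Set ℤ) ∧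
      ∀ g : G, χ g = (a : ℂ) * (if g = 1 then (Fintype.card G : ℂ) else 0)
          + (δ₁ : ℂ) * (lam₁ g : ℂ) + (δ₂ : ℂ) * (lam₂ g : ℂ) := by
  have : Fintype (G →* ℂˣ) := .ofFinite _
  classical
  obtain ⟨c, hc⟩ := hgen
  have hχ (x : G) : χ x = ∑ φ, (c φ : ℂ) * φ x := by
    rw [hc, Finsupp.sum_fintype _ _ fun φ => by rw [Int.cast_zero, zero_mul]]
  obtain ⟨a, ha⟩ := exists_sum_abs_sub_le_two h2 h3 h5 fun x hx => hχ x ▸ hval x hx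
  obtain ⟨δ, φ, hδ, hsum⟩ := exists_eq_sum_single (n := 2) ha
  refine ⟨a, δ 0, δ 1, φ 0, φ 1, hδ 0, hδ 1, fun g => ?_⟩
  have hcoeff (ψ : G →* ℂˣ) : c ψ = a + (∑ k, Pi.single (φ k) (δ k) : (G →* ℂˣ) → ℤ) ψ := by
    rw [← hsum, add_sub_cancel]
  rw [hχ, ← sum_monoidHom_units_apply]
  simp [hcoeff, Fin.sum_univ_two, add_mul, sum_add_distrib, mul_sum, add_assoc, Pi.single_apply]
end

section
/- Let G be a finite group. The prime graph Γ(G) is disconnected if and only if there exists a generalized character χ of G such that χ(x) is either 0 or a root of unity for every nonidentity x ∈ G, and there exist nonidentity elements x, y ∈ G with χ(x) = 0 and χ(y) a root of unity (i.e., χ is neither an integer multiple of the regular character nor root-of-unity valued on all nonidentity elements). -/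
/-- A generalized character of a finite group: the difference of the characters of two
finite-dimensional complex representations. -/
def IsGenChar (G : Type) [Group G] (χ : G → ℂ) : Prop :=
  ∃ V W : FDRep ℂ G, ∀ g : G, χ g = V.character g - W.character g

open Module MulAction

section Eigenvalues

variable {ι K V : Type*} [Field K] [AddCommGroup V] [Module K V]

lemma trace_eq_sum_of_apply_basis [Fintype ι] (b : Basis ι K V) {f : End K V} {μ : ι → K}
    (hf : ∀ i, f (b i) = μ i • b i) : LinearMap.trace K V f = ∑ i, μ i := by
  classical
  simp [LinearMap.trace_eq_matrix_trace K b, Matrix.trace, LinearMap.toMatrix_apply, hf]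

lemma iSup_eigenspace_eq_top_of_pow_eq_one [IsAlgClosed K] [FiniteDimensional K V]
    {f : End K V} {n : ℕ} (hn : (n : K) ≠ 0) (hf : f ^ n = 1) : ⨆ μ, f.eigenspace μ = ⊤ := by
  have hsep : (Polynomial.X ^ n - Polynomial.C 1 : Polynomial K).Separable :=
    Polynomial.separable_X_pow_sub_C 1 hn one_ne_zero
  exact (End.isSemisimple_of_squarefree_aeval_eq_zero hsep.squarefree
    (by simp [hf])).iSup_eigenspace_eq_top

lemma exists_basis_hasEigenvector [FiniteDimensional K V] {f : End K V}
    (hf : ⨆ μ, f.eigenspace μ = ⊤) :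
    ∃ (b : Basis (Fin (finrank K V)) K V) (μ : Fin (finrank K V) → K),
      ∀ i, f.HasEigenvector (μ i) (b i) := by
  classical
  have hinternal := DirectSum.isInternal_submodule_of_iSupIndep_of_iSup_eq_top
    f.eigenspaces_iSupIndep hf
  let b := hinternal.collectedBasis fun μ ↦ finBasis K (f.eigenspace μ)
  let e := b.indexEquiv (finBasis K V)
  refine ⟨b.reindex e, fun i ↦ (e.symm i).1, fun i ↦ ?_⟩
  rw [Basis.reindex_apply]
  exact ⟨hinternal.collectedBasis_mem _ _, b.ne_zero _⟩

lemma exists_trace_pow_eq_sum_pow [IsAlgClosed K] [FiniteDimensional K V] {f : End K V} {n : ℕ}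
    (hn : (n : K) ≠ 0) (hf : f ^ n = 1) :
    ∃ μ : Fin (finrank K V) → K, (∀ i, μ i ^ n = 1) ∧
      ∀ k, LinearMap.trace K V (f ^ k) = ∑ i, μ i ^ k := by
  obtain ⟨b, μ, hμ⟩ :=
    exists_basis_hasEigenvector (iSup_eigenspace_eq_top_of_pow_eq_one hn hf)
  refine ⟨μ, fun i ↦ ?_, fun k ↦ trace_eq_sum_of_apply_basis b fun i ↦ (hμ i).pow_apply k⟩
  have hfix : μ i ^ n • b i = (1 : K) • b i := by
    rw [← (hμ i).pow_apply, hf, End.one_apply, one_smul]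
  exact smul_left_injective K (b.ne_zero i) hfix

end Eigenvalues

section Reduction

universe u

lemma exists_ringHom_field_charP (A : Type u) [CommRing A] [CharZero A] [Algebra.IsIntegral ℤ A]
    (p : ℕ) [Fact p.Prime] :
    ∃ (k : Type u) (_ : Field k), CharP k p ∧ Nonempty (A →+* k) := by
  have hker : RingHom.ker (algebraMap ℤ A) ≤ Ideal.span {(p : ℤ)} :=
    ((RingHom.injective_iff_ker_eq_bot _).1 (algebraMap ℤ A).injective_int).trans_le bot_le
  obtain ⟨M, hM, hMp⟩ := Ideal.exists_ideal_over_maximal_of_isIntegral _ hker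
  refine ⟨A ⧸ M, Ideal.Quotient.field M, ⟨fun n ↦ ?_⟩, ⟨Ideal.Quotient.mk M⟩⟩
  rw [← map_natCast (Ideal.Quotient.mk M), Ideal.Quotient.eq_zero_iff_mem,
    ← Int.natCast_dvd_natCast, ← Ideal.mem_span_singleton, ← hMp, Ideal.mem_comap, map_natCast]

end Reduction

/-- The ring of algebraic integers in `ℂ`, where generalized characters take their values and can
be reduced modulo a prime. -/
abbrev AlgInt := integralClosure ℤ ℂ

lemma IsRootOfUnity.isIntegral {z : ℂ} : IsRootOfUnity z → IsIntegral ℤ z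
  | ⟨_, hn, hz⟩ => .of_pow hn (hz ▸ isIntegral_one)

lemma IsRootOfUnity.ne_zero {z : ℂ} : IsRootOfUnity z → z ≠ 0
  | ⟨_, hn, hz⟩ => (IsUnit.of_pow_eq_one hz hn.ne').ne_zero

lemma IsRootOfUnity.map_ne_zero {k : Type*} [Ring k] [Nontrivial k] (φ : AlgInt →+* k)
    {a : AlgInt} : IsRootOfUnity a → φ a ≠ 0
  | ⟨n, hn, ha⟩ => by
    have hpow : a ^ n = 1 := Subtype.ext ha
    exact ((IsUnit.of_pow_eq_one hpow hn.ne').map φ).ne_zero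

lemma exists_character_pow_eq_sum_pow {G : Type} [Group G] [Finite G] (V : FDRep ℂ G) (x : G) :
    ∃ μ : Fin (finrank ℂ V) → AlgInt, ∀ k, V.character (x ^ k) = ∑ i, (μ i : ℂ) ^ k := by
  have hρ : V.ρ x ^ Nat.card G = 1 := by rw [← map_pow, pow_card_eq_one', map_one]
  obtain ⟨μ, hμ, htrace⟩ :=
    exists_trace_pow_eq_sum_pow (Nat.cast_ne_zero.2 Nat.card_pos.ne') hρ
  refine ⟨fun i ↦ ⟨μ i, IsRootOfUnity.isIntegral ⟨_, Nat.card_pos, hμ i⟩⟩, fun k ↦ ?_⟩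
  rw [FDRep.character, map_pow]
  exact htrace k

namespace IsGenChar

variable {G : Type} [Group G] {χ : G → ℂ}

lemma exists_apply_pow_eq_sub [Finite G] (hχ : IsGenChar G χ) (x : G) :
    ∃ (m n : ℕ) (μ : Fin m → AlgInt) (ν : Fin n → AlgInt),
      ∀ k, χ (x ^ k) = (∑ i, μ i ^ k - ∑ i, ν i ^ k : AlgInt) := by
  obtain ⟨V, W, h⟩ := hχ
  obtain ⟨μ, hμ⟩ := exists_character_pow_eq_sum_pow V x
  obtain ⟨ν, hν⟩ := exists_character_pow_eq_sum_pow W x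
  exact ⟨_, _, μ, ν, fun k ↦ by rw [h, hμ, hν]; push_cast; rfl⟩

lemma isIntegral [Finite G] (hχ : IsGenChar G χ) (x : G) : IsIntegral ℤ (χ x) := by
  obtain ⟨_, _, _, _, h⟩ := hχ.exists_apply_pow_eq_sub x
  rw [← pow_one x, h]
  exact Subtype.prop _

/-- The values of a generalized character of a finite group, viewed in the ring of algebraic
integers. -/
def toAlgInt [Finite G] (hχ : IsGenChar G χ) (x : G) : AlgInt := ⟨χ x, hχ.isIntegral x⟩

lemma map_toAlgInt_pow_char [Finite G] (hχ : IsGenChar G χ) {k : Type*} [CommRing k] {p : ℕ}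
    [Fact p.Prime] [CharP k p] (φ : AlgInt →+* k) (x : G) :
    φ (hχ.toAlgInt (x ^ p)) = φ (hχ.toAlgInt x) ^ p := by
  obtain ⟨_, _, μ, ν, h⟩ := hχ.exists_apply_pow_eq_sub x
  have hval (j : ℕ) : hχ.toAlgInt (x ^ j) = ∑ i, μ i ^ j - ∑ i, ν i ^ j := Subtype.ext (h j)
  have hx := hval 1
  simp only [pow_one] at hx
  rw [hval, hx]
  simp only [map_sub, map_sum, map_pow, sub_pow_char, sum_pow_char]

lemma map_toAlgInt_of_apply_eq_intCast [Finite G] (hχ : IsGenChar G χ) {k : Type*} [Ring k]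
    (φ : AlgInt →+* k) {x : G} {n : ℤ} (hx : χ x = n) : φ (hχ.toAlgInt x) = n := by
  rw [show hχ.toAlgInt x = n from Subtype.ext (by simpa [toAlgInt] using hx), map_intCast]

lemma exists_apply_one_eq_intCast (hχ : IsGenChar G χ) : ∃ n : ℤ, χ 1 = n := by
  obtain ⟨V, W, h⟩ := hχ
  exact ⟨finrank ℂ V - finrank ℂ W, by simp [h]⟩

lemma map_toAlgInt_eq_zero_iff [Finite G] (hχ : IsGenChar G χ) {k : Type*} [Ring k] [Nontrivial k]
    (φ : AlgInt →+* k) {x : G} (hx : χ x = 0 ∨ IsRootOfUnity (χ x)) :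
    φ (hχ.toAlgInt x) = 0 ↔ χ x = 0 := by
  refine ⟨fun h ↦ hx.resolve_right fun hroot ↦ IsRootOfUnity.map_ne_zero φ hroot h, fun h ↦ ?_⟩
  simpa using hχ.map_toAlgInt_of_apply_eq_intCast φ (n := 0) (by simpa using h)

lemma apply_pow_prime_eq_zero_iff [Finite G] (hχ : IsGenChar G χ) {p : ℕ} [hp : Fact p.Prime]
    {x : G} (hx : χ x = 0 ∨ IsRootOfUnity (χ x)) (hxp : χ (x ^ p) = 0 ∨ IsRootOfUnity (χ (x ^ p))) :
    χ (x ^ p) = 0 ↔ χ x = 0 := by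
  obtain ⟨k, _, _, ⟨φ⟩⟩ := exists_ringHom_field_charP AlgInt p
  rw [← hχ.map_toAlgInt_eq_zero_iff φ hx, ← hχ.map_toAlgInt_eq_zero_iff φ hxp,
    hχ.map_toAlgInt_pow_char, pow_eq_zero_iff hp.out.ne_zero]

lemma apply_eq_zero_iff_dvd_of_pow_eq_one [Finite G] (hχ : IsGenChar G χ) {n : ℤ} (hn : χ 1 = n)
    {p : ℕ} [hp : Fact p.Prime] {x : G} (hx : χ x = 0 ∨ IsRootOfUnity (χ x)) (hxp : x ^ p = 1) :
    χ x = 0 ↔ (p : ℤ) ∣ n := by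
  obtain ⟨k, _, _, ⟨φ⟩⟩ := exists_ringHom_field_charP AlgInt p
  rw [← hχ.map_toAlgInt_eq_zero_iff φ hx, ← pow_eq_zero_iff hp.out.ne_zero,
    ← hχ.map_toAlgInt_pow_char, hxp, hχ.map_toAlgInt_of_apply_eq_intCast φ hn,
    CharP.intCast_eq_zero_iff k p]

theorem apply_eq_zero_iff_dvd [Finite G] (hχ : IsGenChar G χ)
    (hval : ∀ x ≠ 1, χ x = 0 ∨ IsRootOfUnity (χ x)) {n : ℤ} (hn : χ 1 = n) {p : ℕ}
    (hp : p.Prime) {x : G} (hpx : p ∣ orderOf x) : χ x = 0 ↔ (p : ℤ) ∣ n := by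
  have : Fact p.Prime := ⟨hp⟩
  have ne_one {y : G} {a : ℕ} (hy : orderOf y = p * a) : y ≠ 1 := by
    rintro rfl
    exact hp.not_dvd_one ⟨a, by rwa [orderOf_one] at hy⟩
  obtain ⟨c, hc⟩ := hpx
  induction c using induction_on_primes generalizing x with
  | zero => exact absurd (hc.trans (mul_zero p)) (orderOf_pos x).ne'
  | one =>
    refine hχ.apply_eq_zero_iff_dvd_of_pow_eq_one hn (hval x (ne_one hc)) ?_
    rw [← orderOf_dvd_iff_pow_eq_one, hc, mul_one]
  | prime_mul q c hq ih =>
    have : Fact q.Prime := ⟨hq⟩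
    have hxq : orderOf (x ^ q) = p * c := by
      rw [orderOf_pow_of_dvd hq.ne_zero (hc ▸ ⟨p * c, by ring⟩), hc]
      exact Nat.div_eq_of_eq_mul_left hq.pos (by ring)
    exact (hχ.apply_pow_prime_eq_zero_iff (hval x (ne_one hc)) (hval _ (ne_one hxq))).symm.trans
      (ih hxq)

end IsGenChar

section CharacterRing

open CategoryTheory MonoidalCategory

variable {G : Type} [Group G]

lemma isGenChar_character (V : FDRep ℂ G) : IsGenChar G V.character :=
  ⟨V, FDRep.of (Representation.trivial ℂ G PUnit), fun g ↦ by simp [FDRep.character]⟩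

namespace IsGenChar

variable {χ ψ : G → ℂ}

lemma neg (hχ : IsGenChar G χ) : IsGenChar G (-χ) := by
  obtain ⟨V, W, h⟩ := hχ
  exact ⟨W, V, fun g ↦ by simp [h]⟩

lemma add (hχ : IsGenChar G χ) (hψ : IsGenChar G ψ) : IsGenChar G (χ + ψ) := by
  obtain ⟨V, W, hχ⟩ := hχ
  obtain ⟨V', W', hψ⟩ := hψ
  refine ⟨FDRep.of (Representation.prod V.ρ V'.ρ), FDRep.of (Representation.prod W.ρ W'.ρ),
    fun g ↦ ?_⟩
  have htrace (X Y : FDRep ℂ G) :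
      (FDRep.of (Representation.prod X.ρ Y.ρ)).character g = X.character g + Y.character g :=
    LinearMap.trace_prodMap' _ _
  rw [Pi.add_apply, hχ, hψ, htrace, htrace]
  ring

lemma mul (hχ : IsGenChar G χ) (hψ : IsGenChar G ψ) : IsGenChar G (χ * ψ) := by
  obtain ⟨V, W, hχ⟩ := hχ
  obtain ⟨V', W', hψ⟩ := hψ
  have htensor (X Y : FDRep ℂ G) : IsGenChar G (X.character * Y.character) := by
    rw [← FDRep.char_tensor]
    exact isGenChar_character (X ⊗ Y)
  have hexpand : χ * ψ = V.character * V'.character + W.character * W'.character +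
      -(V.character * W'.character + W.character * V'.character) := by
    ext g
    simp only [Pi.mul_apply, Pi.add_apply, Pi.neg_apply, hχ, hψ]
    ring
  rw [hexpand]
  exact ((htensor V V').add (htensor W W')).add ((htensor V W').add (htensor W V')).neg

end IsGenChar

variable (G) in
/-- The ring of generalized characters of `G`. -/
def genCharRing : Subring (G → ℂ) where
  carrier := {χ | IsGenChar G χ}
  zero_mem' := ⟨FDRep.of (Representation.trivial ℂ G ℂ), _, fun _ ↦ (sub_self _).symm⟩
  one_mem' := by
    have hone : (FDRep.of (Representation.trivial ℂ G ℂ)).character = 1 := by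
      ext g
      simp [FDRep.character]
    exact hone ▸ isGenChar_character _
  neg_mem' := IsGenChar.neg
  add_mem' := IsGenChar.add
  mul_mem' := IsGenChar.mul

variable (G) in
/-- The ring of integer-valued generalized characters of `G`, as functions to `ℤ`. -/
def intGenCharRing : Subalgebra ℤ (G → ℤ) :=
  subalgebraOfSubring ((genCharRing G).comap ((Int.castRingHom ℂ).compLeft G))

lemma mem_intGenCharRing {f : G → ℤ} :
    f ∈ intGenCharRing G ↔ IsGenChar G fun g ↦ (f g : ℂ) :=
  Iff.rfl

lemma apply_pow_prime_pow_modEq [Finite G] {f : G → ℤ} (hf : f ∈ intGenCharRing G)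
    (p : ℕ) [Fact p.Prime] (x : G) (n : ℕ) : f (x ^ p ^ n) ≡ f x [ZMOD p] := by
  induction n with
  | zero => rw [pow_zero, pow_one]
  | succ n ih =>
    refine .trans ?_ ih
    obtain ⟨k, _, _, ⟨φ⟩⟩ := exists_ringHom_field_charP AlgInt p
    have hχ := mem_intGenCharRing.1 hf
    have hφ (y : G) : φ (hχ.toAlgInt y) = (f y : k) := hχ.map_toAlgInt_of_apply_eq_intCast φ rfl
    rw [← CharP.intCast_eq_intCast k p, pow_succ, pow_mul, ← hφ, hχ.map_toAlgInt_pow_char, hφ,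
      ← frobenius_def, map_intCast]

end CharacterRing

section PermutationCharacter

lemma character_ofMulAction (k G X : Type*) [Field k] [Group G] [MulAction G X] [Finite X] (g : G) :
    (Representation.ofMulAction k G X).character g = Nat.card (fixedBy X g) := by
  classical
  have := Fintype.ofFinite X
  let b : Basis X k (MonoidAlgebra k X) := .ofRepr (MonoidAlgebra.coeffLinearEquiv k)
  rw [Representation.character, LinearMap.trace_eq_matrix_trace k b, Matrix.trace]
  simp [LinearMap.toMatrix_apply, b, Finsupp.single_apply, Nat.card_eq_fintype_card,
    Fintype.card_subtype]

/-- The permutation character of an action of `G` on `X`, counting fixed points, with values in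
`ℤ`. -/
noncomputable def permCharacter (G X : Type*) [Group G] [MulAction G X] (g : G) : ℤ :=
  Nat.card (fixedBy X g)

lemma permCharacter_mem_intGenCharRing (G X : Type) [Group G] [MulAction G X] [Finite X] :
    permCharacter G X ∈ intGenCharRing G := by
  convert isGenChar_character (FDRep.of (Representation.ofMulAction ℂ G X)) using 1
  rw [mem_intGenCharRing]
  congr! 2 with g
  rw [permCharacter, Int.cast_natCast]
  exact (character_ofMulAction ℂ G X g).symm

end PermutationCharacter

section Indicator

variable {α R : Type*} [CommRing R] (A : Subalgebra R (α → R))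

lemma exists_mem_apply_eq_one_and_eq_zero {x y : α}
    (hsep : ∀ M : Ideal R, M.IsMaximal → ∃ f ∈ A, f x - f y ∉ M) :
    ∃ f ∈ A, f x = 1 ∧ f y = 0 := by
  let eval (z : α) : (α → R) →ₗ[R] R := LinearMap.proj z
  let δ : A →ₗ[R] R := (eval x - eval y) ∘ₗ A.val.toLinearMap
  have htop : LinearMap.range δ = (⊤ : Ideal R) := by
    by_contra hne
    obtain ⟨M, hM, hle⟩ := Ideal.exists_le_maximal _ hne
    obtain ⟨f, hf, hfM⟩ := hsep M hM
    exact hfM (hle ⟨⟨f, hf⟩, rfl⟩)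
  obtain ⟨⟨f, hf⟩, hfδ⟩ : (1 : R) ∈ LinearMap.range δ := htop ▸ Submodule.mem_top
  have hfxy : f x - f y = 1 := hfδ
  exact ⟨f - algebraMap R _ (f y), sub_mem hf (A.algebraMap_mem _), by simpa using hfxy, by simp⟩

lemma exists_mem_eqOn_one_and_eqOn_zero {s t : Set α} (hs : s.Finite) (ht : t.Finite)
    (hsep : ∀ x ∈ s, ∀ y ∈ t, ∃ f ∈ A, f x = 1 ∧ f y = 0) :
    ∃ f ∈ A, s.EqOn f 1 ∧ t.EqOn f 0 := by
  have hpoint (x) (hx : x ∈ s) : ∃ f ∈ A, f x = 1 ∧ t.EqOn f 0 := by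
    choose! g hg hgx hgy using hsep x hx
    refine ⟨∏ y ∈ ht.toFinset, g y, prod_mem fun y hy ↦ hg y (by simpa using hy), ?_, fun y hy ↦ ?_⟩
    · rw [Finset.prod_apply]
      exact Finset.prod_eq_one fun y hy ↦ hgx y (by simpa using hy)
    · rw [Finset.prod_apply]
      exact Finset.prod_eq_zero (ht.mem_toFinset.2 hy) (hgy y hy)
  choose! h hA hone hzero using hpoint
  refine ⟨1 - ∏ x ∈ hs.toFinset, (1 - h x), sub_mem (one_mem A)
    (prod_mem fun x hx ↦ sub_mem (one_mem A) (hA x (by simpa using hx))), fun x hx ↦ ?_,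
    fun y hy ↦ ?_⟩
  · have hvanish : ∏ z ∈ hs.toFinset, (1 - h z) x = 0 :=
      Finset.prod_eq_zero (hs.mem_toFinset.2 hx) (by simp [hone x hx])
    rw [Pi.sub_apply, Finset.prod_apply, hvanish, sub_zero]
  · have hunit : ∏ z ∈ hs.toFinset, (1 - h z) y = 1 :=
      Finset.prod_eq_one fun z hz ↦ by simp [hzero z (by simpa using hz) hy]
    rw [Pi.sub_apply, Finset.prod_apply, hunit, Pi.one_apply, sub_self, Pi.zero_apply]

lemma exists_mem_eqOn_one_and_eqOn_zero_of_not_dvd (A : Subalgebra ℤ (α → ℤ)) {s t : Set α}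
    (hs : s.Finite) (ht : t.Finite)
    (hsep : ∀ x ∈ s, ∀ y ∈ t, ∀ p : ℕ, p.Prime → ∃ f ∈ A, ¬ (p : ℤ) ∣ f x - f y) :
    ∃ f ∈ A, s.EqOn f 1 ∧ t.EqOn f 0 := by
  refine exists_mem_eqOn_one_and_eqOn_zero A hs ht fun x hx y hy ↦
    exists_mem_apply_eq_one_and_eq_zero A fun M hM ↦ ?_
  obtain ⟨d, rfl⟩ : ∃ d, M = Ideal.span {d} := IsPrincipalIdealRing.principal M |>.principal
  have hd : d.natAbs ≠ 1 := fun h ↦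
    hM.ne_top (Ideal.span_singleton_eq_top.2 (Int.isUnit_iff_natAbs_eq.2 h))
  obtain ⟨p, hp, hpd⟩ := Nat.exists_prime_and_dvd hd
  obtain ⟨f, hf, hpf⟩ := hsep x hx y hy p hp
  exact ⟨f, hf, fun hmem ↦
    hpf ((Int.natCast_dvd.2 hpd).trans (Ideal.mem_span_singleton.1 hmem))⟩

end Indicator

section SeparatingSubgroup

variable {G : Type*} [Group G]

lemma orderOf_conj_inv (g x : G) : orderOf (g⁻¹ * x * g) = orderOf x := by
  simpa using (MulAut.conj g⁻¹).orderOf_eq x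

lemma mem_of_pow_prime_pow_mem {p : ℕ} (hp : p.Prime) {H : Subgroup G} {x : G}
    (hpx : ¬ p ∣ orderOf x) {k : ℕ} (hx : x ^ p ^ k ∈ H) : x ∈ H := by
  obtain ⟨m, hm⟩ :=
    exists_pow_eq_self_of_coprime ((hp.coprime_iff_not_dvd.2 hpx).pow_left k)
  exact hm ▸ H.pow_mem hx m

lemma exists_not_dvd_orderOf_pow_prime_pow [Finite G] {p : ℕ} (hp : p.Prime) (y : G) :
    ∃ k, ¬ p ∣ orderOf (y ^ p ^ k) := by
  obtain ⟨k, m, hm, hy⟩ := Nat.exists_eq_pow_mul_and_not_dvd (orderOf_pos y).ne' p hp.ne_one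
  refine ⟨k, ?_⟩
  rwa [orderOf_pow_of_dvd (pow_ne_zero k hp.ne_zero) ⟨m, hy⟩, hy,
    Nat.mul_div_cancel_left m (pow_pos hp.pos k)]

lemma exists_ge_forall_pow_mem_not_dvd_index [Finite G] (C : Subgroup G) [C.Normal] (p : ℕ)
    [Fact p.Prime] :
    ∃ K : Subgroup G, C ≤ K ∧ (∀ h ∈ K, ∃ k, h ^ p ^ k ∈ C) ∧ ¬ p ∣ K.index := by
  let Q : Sylow p (G ⧸ C) := default
  refine ⟨Q.comap (QuotientGroup.mk' C), ?_, fun h hh ↦ ?_, ?_⟩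
  · simpa using (QuotientGroup.mk' C).ker_le_comap Q.toSubgroup
  · obtain ⟨k, hk⟩ := Q.isPGroup' ⟨_, hh⟩
    exact ⟨k, (QuotientGroup.eq_one_iff _).1 (congrArg Subtype.val hk)⟩
  · rw [Subgroup.index_comap_of_surjective _ (QuotientGroup.mk'_surjective C)]
    exact Q.not_dvd_index

lemma exists_ge_forall_pow_mem_not_dvd_relIndex_normalizer [Finite G] (C : Subgroup G) (p : ℕ)
    [Fact p.Prime] :
    ∃ H : Subgroup G, C ≤ H ∧ (∀ h ∈ H, ∃ k, h ^ p ^ k ∈ C) ∧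
      ¬ p ∣ H.relIndex (Subgroup.normalizer C) := by
  set N := Subgroup.normalizer (C : Set G)
  have : (C.subgroupOf N).Normal := Subgroup.normal_in_normalizer
  obtain ⟨K, hCK, hK, hindex⟩ := exists_ge_forall_pow_mem_not_dvd_index (C.subgroupOf N) p
  refine ⟨K.map N.subtype, ?_, ?_, ?_⟩
  · rw [← Subgroup.map_subgroupOf_eq_of_le (Subgroup.le_normalizer : C ≤ N)]
    exact Subgroup.map_mono hCK
  · rintro _ ⟨h, hh, rfl⟩
    exact hK h hh
  · rwa [Subgroup.relIndex, Subgroup.subgroupOf,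
      Subgroup.comap_map_eq_self_of_injective N.subtype_injective]

lemma mk_mem_fixedBy_iff {H : Subgroup G} {x g : G} :
    (g : G ⧸ H) ∈ fixedBy (G ⧸ H) x ↔ g⁻¹ * x * g ∈ H := by
  rw [mem_fixedBy, eq_comm, Quotient.smul_coe, smul_eq_mul, QuotientGroup.eq, mul_assoc]

lemma mem_normalizer_zpowers_iff [Finite G] {x g : G} :
    g ∈ Subgroup.normalizer (Subgroup.zpowers x : Set G) ↔ g⁻¹ * x * g ∈ Subgroup.zpowers x := by
  refine ⟨fun hg ↦ (Subgroup.mem_normalizer_iff''.1 hg x).1 (Subgroup.mem_zpowers x), fun hg ↦ ?_⟩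
  rw [← inv_mem_iff]
  refine Subgroup.mem_normalizer_fintype ?_
  rintro _ ⟨n, rfl⟩
  have hconj : (g⁻¹ * x * g⁻¹⁻¹) ^ n ∈ Subgroup.zpowers x :=
    Subgroup.zpow_mem _ (by rwa [inv_inv]) n
  rwa [conj_zpow] at hconj

lemma smul_mk_one {N H : Subgroup G} (n : N) : n • ((1 : G) : G ⧸ H) = (n : G) :=
  congrArg QuotientGroup.mk (mul_one (n : G))

lemma natCard_orbit_mk_one (N H : Subgroup G) :
    Nat.card (orbit N ((1 : G) : G ⧸ H)) = H.relIndex N := by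
  have hstab : stabilizer N ((1 : G) : G ⧸ H) = H.subgroupOf N := by
    ext n
    rw [mem_stabilizer_iff, smul_mk_one, eq_comm, QuotientGroup.eq, inv_one, one_mul,
      Subgroup.mem_subgroupOf]
  rw [Nat.card_coe_set_eq, ← index_stabilizer, hstab, Subgroup.relIndex]

lemma fixedBy_eq_orbit_normalizer_zpowers [Finite G] {p : ℕ} (hp : p.Prime) {x : G}
    (hpx : ¬ p ∣ orderOf x) {H : Subgroup G} (hxH : x ∈ H)
    (hH : ∀ h ∈ H, ∃ k, h ^ p ^ k ∈ Subgroup.zpowers x) :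
    fixedBy (G ⧸ H) x =
      orbit (Subgroup.normalizer (Subgroup.zpowers x : Set G)) ((1 : G) : G ⧸ H) := by
  ext z
  induction z using QuotientGroup.induction_on with | H g => ?_
  refine ⟨fun hg ↦ ?_, ?_⟩
  · rw [mk_mem_fixedBy_iff] at hg
    obtain ⟨k, hk⟩ := hH _ hg
    have hmem := mem_of_pow_prime_pow_mem hp (by rwa [orderOf_conj_inv]) hk
    exact ⟨⟨g, mem_normalizer_zpowers_iff.2 hmem⟩, smul_mk_one _⟩
  · rintro ⟨n, hn : n • ((1 : G) : G ⧸ H) = g⟩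
    rw [← hn, smul_mk_one, mk_mem_fixedBy_iff]
    exact Subgroup.zpowers_le.2 hxH (mem_normalizer_zpowers_iff.1 n.2)

lemma permCharacter_quotient_eq_zero {H : Subgroup G} {x : G} (hx : ∀ g : G, g⁻¹ * x * g ∉ H) :
    permCharacter G (G ⧸ H) x = 0 := by
  have hempty : IsEmpty (fixedBy (G ⧸ H) x) := by
    refine Set.isEmpty_coe_sort.2 (Set.eq_empty_of_forall_notMem fun z ↦ ?_)
    induction z using QuotientGroup.induction_on with
    | H g => exact fun hg ↦ hx g (mk_mem_fixedBy_iff.1 hg)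
  rw [permCharacter, Nat.card_of_isEmpty, Nat.cast_zero]

lemma exists_permCharacter_eq_zero_and_not_dvd [Finite G] {x y : G} (hx : x ≠ 1) {p : ℕ}
    (hp : p.Prime) (hpx : ¬ p ∣ orderOf x) (hpy : ¬ p ∣ orderOf y)
    (hxy : (orderOf x).Coprime (orderOf y)) :
    ∃ H : Subgroup G, permCharacter G (G ⧸ H) x = 0 ∧ ¬ (p : ℤ) ∣ permCharacter G (G ⧸ H) y := by
  have : Fact p.Prime := ⟨hp⟩
  obtain ⟨H, hyH, hH, hindex⟩ :=
    exists_ge_forall_pow_mem_not_dvd_relIndex_normalizer (Subgroup.zpowers y) p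
  refine ⟨H, permCharacter_quotient_eq_zero fun g hg ↦ hx ?_, ?_⟩
  · obtain ⟨k, hk⟩ := hH _ hg
    have hmem := mem_of_pow_prime_pow_mem hp (by rwa [orderOf_conj_inv]) hk
    have hdvd := orderOf_dvd_of_mem_zpowers hmem
    rw [orderOf_conj_inv] at hdvd
    exact orderOf_eq_one_iff.1 (hxy.eq_one_of_dvd hdvd)
  · rwa [permCharacter, fixedBy_eq_orbit_normalizer_zpowers hp hpy (Subgroup.zpowers_le.1 hyH) hH,
      natCard_orbit_mk_one, Int.natCast_dvd_natCast]

end SeparatingSubgroup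

section Separation

variable {G : Type} [Group G] [Finite G]

lemma exists_mem_intGenCharRing_eq_zero_and_not_dvd {x y : G} (hx : x ≠ 1) {p : ℕ}
    (hp : p.Prime) (hpx : ¬ p ∣ orderOf x) (hxy : (orderOf x).Coprime (orderOf y)) :
    ∃ f ∈ intGenCharRing G, f x = 0 ∧ ¬ (p : ℤ) ∣ f y := by
  have : Fact p.Prime := ⟨hp⟩
  obtain ⟨k, hk⟩ := exists_not_dvd_orderOf_pow_prime_pow hp y
  obtain ⟨H, hHx, hHy⟩ := exists_permCharacter_eq_zero_and_not_dvd hx hp hpx hk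
    (hxy.coprime_dvd_right (orderOf_pow_dvd _))
  have hmem := permCharacter_mem_intGenCharRing G (G ⧸ H)
  exact ⟨_, hmem, hHx, fun hd ↦
    hHy ((apply_pow_prime_pow_modEq hmem p y k).dvd_iff.2 hd)⟩

lemma exists_mem_intGenCharRing_not_dvd_sub {x y : G} (hx : x ≠ 1) (hy : y ≠ 1)
    (hxy : (orderOf x).Coprime (orderOf y)) {p : ℕ} (hp : p.Prime) :
    ∃ f ∈ intGenCharRing G, ¬ (p : ℤ) ∣ f x - f y := by
  by_cases hpx : p ∣ orderOf x
  · have hpy : ¬ p ∣ orderOf y := fun h ↦ hp.ne_one (Nat.eq_one_of_dvd_coprimes hxy hpx h)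
    obtain ⟨f, hf, hfy, hfx⟩ := exists_mem_intGenCharRing_eq_zero_and_not_dvd hy hp hpy hxy.symm
    exact ⟨f, hf, by rwa [hfy, sub_zero]⟩
  · obtain ⟨f, hf, hfx, hfy⟩ := exists_mem_intGenCharRing_eq_zero_and_not_dvd hx hp hpx hxy
    exact ⟨f, hf, by rwa [hfx, zero_sub, dvd_neg]⟩

theorem exists_mem_intGenCharRing_eqOn_one_and_eqOn_zero {s t : Set G} (hs : 1 ∉ s) (ht : 1 ∉ t)
    (hst : ∀ x ∈ s, ∀ y ∈ t, (orderOf x).Coprime (orderOf y)) :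
    ∃ f ∈ intGenCharRing G, s.EqOn f 1 ∧ t.EqOn f 0 :=
  exists_mem_eqOn_one_and_eqOn_zero_of_not_dvd _ s.toFinite t.toFinite fun x hx y hy _ ↦
    exists_mem_intGenCharRing_not_dvd_sub (ne_of_mem_of_not_mem hx hs)
      (ne_of_mem_of_not_mem hy ht) (hst x hx y hy)

end Separation

/-- The prime graph of `G` has vertex set the disjoint union of the nonempty sets `S` and `T`, with
no edge between `S` and `T`. -/
structure IsPrimeGraphSeparation (G : Type*) [Group G] [Fintype G] (S T : Set ℕ) : Prop where
  nonempty_left : S.Nonempty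
  nonempty_right : T.Nonempty
  disjoint : Disjoint S T
  union_eq : S ∪ T = {p : ℕ | p.Prime ∧ p ∣ Fintype.card G}
  not_exists_orderOf_eq_mul : ∀ p ∈ S, ∀ q ∈ T, ¬ ∃ g : G, orderOf g = p * q

namespace IsPrimeGraphSeparation

section

variable {G : Type*} [Group G] [Fintype G] {S T : Set ℕ}

lemma symm (h : IsPrimeGraphSeparation G S T) : IsPrimeGraphSeparation G T S where
  nonempty_left := h.nonempty_right
  nonempty_right := h.nonempty_left
  disjoint := h.disjoint.symm
  union_eq := by rw [Set.union_comm, h.union_eq]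
  not_exists_orderOf_eq_mul q hq p hp := by
    simpa only [mul_comm] using h.not_exists_orderOf_eq_mul p hp q hq

lemma mem_or_mem_iff (h : IsPrimeGraphSeparation G S T) {p : ℕ} :
    p ∈ S ∨ p ∈ T ↔ p.Prime ∧ p ∣ Fintype.card G :=
  Set.ext_iff.1 h.union_eq p

lemma not_dvd_orderOf (h : IsPrimeGraphSeparation G S T) {p q : ℕ} (hp : p ∈ S) (hq : q ∈ T)
    {x : G} (hpx : p ∣ orderOf x) : ¬ q ∣ orderOf x := fun hqx ↦ by
  have hcop : p.Coprime q :=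
    (Nat.coprime_primes (h.mem_or_mem_iff.1 (.inl hp)).1 (h.mem_or_mem_iff.1 (.inr hq)).1).2
      (h.disjoint.ne_of_mem hp hq)
  exact h.not_exists_orderOf_eq_mul p hp q hq ⟨x ^ (orderOf x / (p * q)),
    orderOf_pow_orderOf_div (orderOf_pos x).ne' (hcop.mul_dvd_of_dvd_of_dvd hpx hqx)⟩

lemma coprime_orderOf (h : IsPrimeGraphSeparation G S T) {x y : G}
    (hx : ∃ p ∈ S, p ∣ orderOf x) (hy : ∃ q ∈ T, q ∣ orderOf y) :
    (orderOf x).Coprime (orderOf y) := by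
  obtain ⟨p, hp, hpx⟩ := hx
  obtain ⟨q, hq, hqy⟩ := hy
  refine Nat.coprime_of_dvd fun r hr hrx hry ↦ ?_
  rcases h.mem_or_mem_iff.2 ⟨hr, hrx.trans orderOf_dvd_card⟩ with hrS | hrT
  · exact h.symm.not_dvd_orderOf hq hrS hqy hry
  · exact h.not_dvd_orderOf hp hrT hpx hrx

lemma exists_ne_one_dvd_orderOf (h : IsPrimeGraphSeparation G S T) :
    ∃ x : G, x ≠ 1 ∧ ∃ p ∈ S, p ∣ orderOf x := by
  obtain ⟨p, hp⟩ := h.nonempty_left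
  obtain ⟨hprime, hdvd⟩ := h.mem_or_mem_iff.1 (.inl hp)
  have : Fact p.Prime := ⟨hprime⟩
  obtain ⟨x, hx⟩ := exists_prime_orderOf_dvd_card p hdvd
  refine ⟨x, ?_, p, hp, hx.symm.dvd⟩
  rintro rfl
  exact hprime.ne_one (hx.symm.trans orderOf_one)

lemma exists_dvd_orderOf_of_ne_one (h : IsPrimeGraphSeparation G S T) {x : G} (hx : x ≠ 1) :
    (∃ p ∈ S, p ∣ orderOf x) ∨ ∃ q ∈ T, q ∣ orderOf x := by
  obtain ⟨r, hr, hrx⟩ := Nat.exists_prime_and_dvd (mt orderOf_eq_one_iff.1 hx)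
  exact (h.mem_or_mem_iff.2 ⟨hr, hrx.trans orderOf_dvd_card⟩).imp (⟨r, ·, hrx⟩) (⟨r, ·, hrx⟩)

lemma not_dvd_orderOf_one (h : IsPrimeGraphSeparation G S T) :
    ¬ ∃ p ∈ S, p ∣ orderOf (1 : G) := by
  rintro ⟨p, hp, hd⟩
  exact (h.mem_or_mem_iff.1 (.inl hp)).1.not_dvd_one (orderOf_one (G := G) ▸ hd)

end

theorem exists_isGenChar {G : Type} [Group G] [Fintype G] {S T : Set ℕ}
    (h : IsPrimeGraphSeparation G S T) :
    ∃ χ : G → ℂ, IsGenChar G χ ∧ (∀ x, (∃ p ∈ S, p ∣ orderOf x) → χ x = 1) ∧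
      ∀ x, (∃ q ∈ T, q ∣ orderOf x) → χ x = 0 := by
  obtain ⟨f, hf, hone, hzero⟩ := exists_mem_intGenCharRing_eqOn_one_and_eqOn_zero
    h.not_dvd_orderOf_one h.symm.not_dvd_orderOf_one fun x hx y hy ↦ h.coprime_orderOf hx hy
  exact ⟨fun g ↦ f g, mem_intGenCharRing.1 hf, fun x hx ↦ by simp [hone hx],
    fun x hx ↦ by simp [hzero hx]⟩

theorem of_isGenChar {G : Type} [Group G] [Fintype G] {χ : G → ℂ} (hχ : IsGenChar G χ)
    (hval : ∀ x ≠ 1, χ x = 0 ∨ IsRootOfUnity (χ x)) {n : ℤ} (hn : χ 1 = n)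
    {x y : G} (hx : x ≠ 1) (hχx : χ x ≠ 0) (hy : y ≠ 1) (hχy : χ y = 0) :
    IsPrimeGraphSeparation G
      {p | (p.Prime ∧ p ∣ Fintype.card G) ∧ ¬ (p : ℤ) ∣ n}
      {p | (p.Prime ∧ p ∣ Fintype.card G) ∧ (p : ℤ) ∣ n} where
  nonempty_left := by
    obtain ⟨p, hp, hpx⟩ := Nat.exists_prime_and_dvd (mt orderOf_eq_one_iff.1 hx)
    exact ⟨p, ⟨hp, hpx.trans orderOf_dvd_card⟩,
      fun hd ↦ hχx ((hχ.apply_eq_zero_iff_dvd hval hn hp hpx).2 hd)⟩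
  nonempty_right := by
    obtain ⟨p, hp, hpy⟩ := Nat.exists_prime_and_dvd (mt orderOf_eq_one_iff.1 hy)
    exact ⟨p, ⟨hp, hpy.trans orderOf_dvd_card⟩,
      (hχ.apply_eq_zero_iff_dvd hval hn hp hpy).1 hχy⟩
  disjoint := Set.disjoint_left.2 fun _ hp hq ↦ hp.2 hq.2
  union_eq := by
    ext p
    simp only [Set.mem_union, Set.mem_ofPred_eq]
    tauto
  not_exists_orderOf_eq_mul := by
    rintro p ⟨⟨hp, -⟩, hpn⟩ q ⟨⟨hq, -⟩, hqn⟩ ⟨g, hg⟩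
    have hpg := hχ.apply_eq_zero_iff_dvd hval hn hp (hg ▸ dvd_mul_right p q)
    have hqg := hχ.apply_eq_zero_iff_dvd hval hn hq (hg ▸ dvd_mul_left q p)
    exact hpn (hpg.1 (hqg.2 hqn))

end IsPrimeGraphSeparation

theorem stmt_2 (G : Type) [Group G] [Fintype G] :
    -- the prime graph Γ(G) is disconnected
    (∃ S T : Set ℕ, S.Nonempty ∧ T.Nonempty ∧ Disjoint S T ∧
        S ∪ T = {p : ℕ | p.Prime ∧ p ∣ Fintype.card G} ∧
        ∀ p ∈ S, ∀ q ∈ T, ¬ ∃ g : G, orderOf g = p * q) ↔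
    -- iff there is a generalized character, zero or a root of unity on G⁺, taking both kinds
    -- of values on nonidentity elements
    (∃ χ : G → ℂ, IsGenChar G χ ∧
        (∀ x : G, x ≠ 1 → χ x = 0 ∨ IsRootOfUnity (χ x)) ∧
        (∃ x : G, x ≠ 1 ∧ χ x = 0) ∧
        (∃ y : G, y ≠ 1 ∧ IsRootOfUnity (χ y))) := by
  constructor
  · rintro ⟨S, T, hS, hT, hdisj, hunion, hno⟩
    have h : IsPrimeGraphSeparation G S T := ⟨hS, hT, hdisj, hunion, hno⟩
    obtain ⟨χ, hχ, hone, hzero⟩ := h.exists_isGenChar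
    have hroot (x) (hx : ∃ p ∈ S, p ∣ orderOf x) : IsRootOfUnity (χ x) :=
      ⟨1, one_pos, by rw [hone x hx, pow_one]⟩
    obtain ⟨x, hx, hxT⟩ := h.symm.exists_ne_one_dvd_orderOf
    obtain ⟨y, hy, hyS⟩ := h.exists_ne_one_dvd_orderOf
    refine ⟨χ, hχ, fun z hz ↦ ?_, ⟨x, hx, hzero x hxT⟩, y, hy, hroot y hyS⟩
    exact (h.exists_dvd_orderOf_of_ne_one hz).symm.imp (hzero z) (hroot z)
  · rintro ⟨χ, hχ, hval, ⟨y, hy, hχy⟩, x, hx, hχx⟩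
    obtain ⟨n, hn⟩ := hχ.exists_apply_one_eq_intCast
    obtain ⟨hS, hT, hdisj, hunion, hno⟩ :=
      IsPrimeGraphSeparation.of_isGenChar hχ hval hn hx hχx.ne_zero hy hχy
    exact ⟨_, _, hS, hT, hdisj, hunion, hno⟩
end

section
/- Let G be a finite group, p a prime dividing |G|, and χ a generalized character of G with (integer) virtual degree d = χ(1). If there exists a p-element x ∈ G such that χ(x) is a root of unity, then d ≡ 1 (mod p) or d ≡ −1 (mod p). -/
/-!
For an algebraic integer `u` that is a sum of `k` roots of unity of order dividing `q = p ^ n`,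
raising the sum to the `q`-th power termwise gives `u ^ q ≡ k` modulo `p`. Applied to the
eigenvalues of `x` in the two representations, this yields `χ(x) ^ q ≡ d` modulo `p`. Complex
conjugation preserves this congruence, so multiplying it with its conjugate gives
`‖χ(x)‖ ^ (2 * q) ≡ d ^ 2`. If `χ(x)` lies on the unit circle, then `p` divides `d ^ 2 - 1` as an
algebraic integer, hence as an integer.
-/

section FrobeniusCongruences

variable {R : Type*} [CommRing R] {p : ℕ}

theorem prime_dvd_add_pow_sub_add_pow (hp : p.Prime) (n : ℕ) (a b : R) :
    (p : R) ∣ (a + b) ^ p ^ n - (a ^ p ^ n + b ^ p ^ n) := by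
  obtain ⟨r, hr⟩ := exists_add_pow_prime_pow_eq hp a b n
  exact ⟨a * b * r, by linear_combination hr⟩

theorem prime_dvd_sub_pow_sub_sub_pow (hp : p.Prime) (n : ℕ) (a b : R) :
    (p : R) ∣ (a - b) ^ p ^ n - (a ^ p ^ n - b ^ p ^ n) := by
  have h := prime_dvd_add_pow_sub_add_pow hp n (a - b) b
  rw [sub_add_cancel, ← dvd_neg] at h
  convert h using 1
  ring

theorem prime_dvd_multiset_sum_pow_sub_card (hp : p.Prime) {n : ℕ} {S : Multiset R}
    (hS : ∀ μ ∈ S, μ ^ p ^ n = 1) : (p : R) ∣ S.sum ^ p ^ n - S.card := by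
  induction S using Multiset.induction with
  | empty => simp [hp.ne_zero]
  | cons a S ih =>
    have ha : a ^ p ^ n = 1 := hS a (S.mem_cons_self a)
    have hsum := ih fun μ hμ => hS μ (Multiset.mem_cons_of_mem hμ)
    rw [Multiset.sum_cons, Multiset.card_cons, Nat.cast_succ]
    convert (prime_dvd_add_pow_sub_add_pow hp n a S.sum).add hsum using 1
    rw [ha]
    ring

end FrobeniusCongruences

theorem dvd_of_algebraMap_dvd_of_irreducible {R A : Type*} [CommRing R] [IsBezout R]
    [CommRing A] [Algebra R A] [FaithfulSMul R A] [Algebra.IsIntegral R A] {π a : R}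
    (hπ : Irreducible π) (h : algebraMap R A π ∣ algebraMap R A a) : π ∣ a := by
  refine (hπ.isCoprime_or_dvd a).resolve_left fun hcop => hπ.not_isUnit ?_
  have hunit : IsUnit (algebraMap R A π) :=
    (hcop.map (algebraMap R A)).isUnit_of_dvd' dvd_rfl h
  exact isUnit_of_map_unit (algebraMap R A) π hunit

section Trace

variable {K V : Type*} [Field K] [AddCommGroup V] [Module K V] [FiniteDimensional K V]

theorem pow_eq_one_of_mem_roots_charpoly {f : Module.End K V} {q : ℕ} (hf : f ^ q = 1) {μ : K}
    (hμ : μ ∈ f.charpoly.roots) : μ ^ q = 1 := by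
  obtain ⟨v, hv⟩ := ((Module.End.hasEigenvalue_iff_isRoot_charpoly f μ).2
    (Polynomial.isRoot_of_mem_roots hμ)).exists_hasEigenvector
  have hfix : μ ^ q • v = (1 : K) • v := by
    rw [← hv.pow_apply, hf, Module.End.one_apply, one_smul]
  exact smul_left_injective K hv.2 hfix

theorem exists_integral_trace_pow_congr_finrank [IsAlgClosed K] {p n : ℕ} (hp : p.Prime)
    {f : Module.End K V} (hf : f ^ p ^ n = 1) :
    ∃ u : integralClosure ℤ K, (u : K) = LinearMap.trace K V f ∧
      (p : integralClosure ℤ K) ∣ u ^ p ^ n - Module.finrank K V := by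
  have hsplit : f.charpoly.Splits := IsAlgClosed.splits _
  have hroots : ∀ μ ∈ f.charpoly.roots, μ ^ p ^ n = 1 :=
    fun μ hμ => pow_eq_one_of_mem_roots_charpoly hf hμ
  have hint : ∀ μ ∈ f.charpoly.roots, μ ∈ integralClosure ℤ K := fun μ hμ =>
    IsIntegral.of_pow (pow_pos hp.pos n) (by rw [hroots μ hμ]; exact isIntegral_one)
  obtain ⟨S, hS⟩ : ∃ S : Multiset (integralClosure ℤ K), S.map (↑) = f.charpoly.roots :=
    CanLift.prf _ hint
  refine ⟨S.sum, ?_, ?_⟩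
  · rw [Module.End.trace_eq_sum_roots_charpoly_of_splits hsplit, ← hS]
    exact map_multiset_sum (integralClosure ℤ K).subtype S
  · have hcard : Module.finrank K V = S.card := by
      rw [← f.charpoly_natDegree, hsplit.natDegree_eq_card_roots, ← hS, Multiset.card_map]
    rw [hcard]
    refine prime_dvd_multiset_sum_pow_sub_card hp fun μ hμ => Subtype.ext ?_
    exact hroots μ (hS ▸ Multiset.mem_map_of_mem _ hμ)

end Trace

namespace IsGenChar

variable {G : Type} [Group G] {χ : G → ℂ} {p n : ℕ} {d : ℤ} {x : G}

theorem exists_integral_pow_congr_degree (hχ : IsGenChar G χ) (hp : p.Prime)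
    (hd : (d : ℂ) = χ 1) (hx : x ^ p ^ n = 1) :
    ∃ u : integralClosure ℤ ℂ, (u : ℂ) = χ x ∧ (p : integralClosure ℤ ℂ) ∣ u ^ p ^ n - d := by
  obtain ⟨V, W, hVW⟩ := hχ
  have hρ (U : FDRep ℂ G) : U.ρ x ^ p ^ n = 1 := by rw [← map_pow, hx, map_one]
  obtain ⟨v, hv, hpv⟩ := exists_integral_trace_pow_congr_finrank hp (hρ V)
  obtain ⟨w, hw, hpw⟩ := exists_integral_trace_pow_congr_finrank hp (hρ W)
  have hd' : d = (Module.finrank ℂ V : ℤ) - Module.finrank ℂ W := by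
    rw [hVW, FDRep.char_one, FDRep.char_one] at hd
    exact_mod_cast hd
  refine ⟨v - w, ?_, ?_⟩
  · rw [hVW]
    exact congrArg₂ (· - ·) hv hw
  · convert (prime_dvd_sub_pow_sub_sub_pow hp n v w).add (hpv.sub hpw) using 1
    rw [hd']
    push_cast
    ring

theorem prime_dvd_degree_sq_sub_one (hχ : IsGenChar G χ) (hp : p.Prime) (hd : (d : ℂ) = χ 1)
    (hx : x ^ p ^ n = 1) (hnorm : ‖χ x‖ = 1) : (p : ℤ) ∣ d ^ 2 - 1 := by
  obtain ⟨u, hu, hpu⟩ := hχ.exists_integral_pow_congr_degree hp hd hx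
  let conj : integralClosure ℤ ℂ →ₐ[ℤ] integralClosure ℤ ℂ :=
    (starRingEnd ℂ).toIntAlgHom.mapIntegralClosure
  have hpconj : (p : integralClosure ℤ ℂ) ∣ conj u ^ p ^ n - d := by
    simpa only [map_sub, map_pow, map_natCast, map_intCast] using map_dvd conj hpu
  have hmul : u * conj u = 1 := by
    refine Subtype.ext ?_
    change (u : ℂ) * starRingEnd ℂ u = 1
    rw [hu, Complex.mul_conj', hnorm, Complex.ofReal_one, one_pow]
  have hdvd : (p : integralClosure ℤ ℂ) ∣ (d : integralClosure ℤ ℂ) ^ 2 - 1 := by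
    have hpow : u ^ p ^ n * conj u ^ p ^ n = 1 := by rw [← mul_pow, hmul, one_pow]
    rw [← hpow, ← dvd_neg]
    convert (hpu.mul_right (conj u ^ p ^ n)).add (hpconj.mul_right d) using 1
    ring
  refine dvd_of_algebraMap_dvd_of_irreducible (A := integralClosure ℤ ℂ)
    (Nat.prime_iff_prime_int.1 hp).irreducible ?_
  simpa using hdvd

end IsGenChar

theorem stmt_6_general (G : Type) [Group G] (p : ℕ) (hp : p.Prime)
    (χ : G → ℂ) (hχ : IsGenChar G χ)
    (d : ℤ) (hd : (d : ℂ) = χ 1)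
    (x : G) (hx : ∃ n : ℕ, orderOf x = p ^ n)
    (hnorm : ‖χ x‖ = 1) :
    (p : ℤ) ∣ d - 1 ∨ (p : ℤ) ∣ d + 1 := by
  obtain ⟨n, hn⟩ := hx
  have hsq : (p : ℤ) ∣ d ^ 2 - 1 :=
    hχ.prime_dvd_degree_sq_sub_one hp hd (hn ▸ pow_orderOf_eq_one x) hnorm
  have hmul : (p : ℤ) ∣ (d - 1) * (d + 1) := by convert hsq using 1; ring
  exact (Nat.prime_iff_prime_int.1 hp).dvd_or_dvd hmul

theorem stmt_6 (G : Type) [Group G] [Fintype G] (p : ℕ) (hp : p.Prime)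
    (hpG : p ∣ Fintype.card G)
    (χ : G → ℂ) (hχ : IsGenChar G χ)
    (d : ℤ) (hd : (d : ℂ) = χ 1)
    (x : G) (hx : ∃ n : ℕ, orderOf x = p ^ n)
    (hroot : IsRootOfUnity (χ x)) :
    (p : ℤ) ∣ d - 1 ∨ (p : ℤ) ∣ d + 1 := by
  obtain ⟨m, hm, hroot_pow⟩ := hroot
  exact stmt_6_general G p hp χ hχ d hd x hx (Complex.norm_eq_one_of_pow_eq_one hroot_pow hm.ne')
end

section
/- Let G be a finite group, p a prime dividing |G|, P a Sylow p-subgroup of G, and χ a generalized character of G with (integer) virtual degree d = χ(1). Suppose χ(x) is a root of unity for every nonidentity p-element x of G. Then: if p is odd or |P| = 2, then d ≡ 1 (mod |P|) or d ≡ −1 (mod |P|); and if p = 2 and |P| ≥ 4, then d ≡ 1 (mod |P|/2) or d ≡ −1 (mod |P|/2). -/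
theorem prime_pow_dvd_or_dvd_of_dvd_mul {M : Type*} [CommMonoidWithZero M] [IsCancelMulZero M]
    {p a b : M} (hp : Prime p) (hab : ¬(p ∣ a ∧ p ∣ b)) {n : ℕ} (h : p ^ n ∣ a * b) :
    p ^ n ∣ a ∨ p ^ n ∣ b := by
  by_cases ha : p ∣ a
  · exact .inl (hp.pow_dvd_of_dvd_mul_right n (fun hb => hab ⟨ha, hb⟩) h)
  · exact .inr (hp.pow_dvd_of_dvd_mul_left n ha h)

theorem odd_prime_pow_dvd_sub_one_or_add_one {p n : ℕ} (hp : p.Prime) (hp2 : p ≠ 2) {d : ℤ}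
    (h : (p : ℤ) ^ n ∣ (d - 1) * (d + 1)) : (p : ℤ) ^ n ∣ d - 1 ∨ (p : ℤ) ^ n ∣ d + 1 := by
  refine prime_pow_dvd_or_dvd_of_dvd_mul (Nat.prime_iff_prime_int.mp hp) ?_ h
  rintro ⟨hsub, hadd⟩
  have hdvd_two : (p : ℤ) ∣ 2 := by
    have hdiff : d + 1 - (d - 1) = 2 := by ring
    exact hdiff ▸ dvd_sub hadd hsub
  exact hp2 ((Nat.prime_dvd_prime_iff_eq hp Nat.prime_two).mp (mod_cast hdvd_two))

theorem two_pow_dvd_sub_one_or_add_one {n : ℕ} {d : ℤ}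
    (h : (2 : ℤ) ^ (n + 1) ∣ (d - 1) * (d + 1)) :
    (2 : ℤ) ^ n ∣ d - 1 ∨ (2 : ℤ) ^ n ∣ d + 1 := by
  obtain _ | n := n
  · simp
  have hodd : Odd d := by
    have hdvd : (2 : ℤ) ∣ (d - 1) * (d + 1) := (dvd_pow_self 2 (by lia)).trans h
    rcases Int.prime_two.dvd_or_dvd hdvd with h | h <;> grind
  obtain ⟨k, rfl⟩ := hodd
  have hk : (2 : ℤ) ^ n ∣ k * (k + 1) := by
    have hfour : (4 : ℤ) * 2 ^ n ∣ 4 * (k * (k + 1)) := by convert h using 1 <;> ring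
    exact (mul_dvd_mul_iff_left four_ne_zero).mp hfour
  have hsub : 2 * k + 1 - 1 = k * 2 := by ring
  have hadd : 2 * k + 1 + 1 = (k + 1) * 2 := by ring
  rw [pow_succ, hsub, hadd]
  exact (prime_pow_dvd_or_dvd_of_dvd_mul Int.prime_two (by lia) hk).imp
    (mul_dvd_mul_right · 2) (mul_dvd_mul_right · 2)

section TraceInverse

open scoped Matrix ComplexOrder

variable {n : Type*} [Fintype n] [DecidableEq n]

theorem trace_inv_eq_star_trace_of_conjTranspose_mul_mul_eq {R : Type*} [CommRing R] [StarRing R]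
    {A H : Matrix n n R} (hH : IsUnit H) (h : Aᴴ * H * A = H) : A⁻¹.trace = star A.trace := by
  have hinv : A⁻¹ = H⁻¹ * Aᴴ * H := by
    refine Matrix.inv_eq_left_inv ?_
    rw [Matrix.mul_assoc, Matrix.mul_assoc, ← Matrix.mul_assoc Aᴴ, h,
      Matrix.nonsing_inv_mul _ ((Matrix.isUnit_iff_isUnit_det _).mp hH)]
  rw [hinv, Matrix.trace_conj' hH, Matrix.trace_conjTranspose]

variable {𝕜 : Type*} [RCLike 𝕜]

theorem exists_posDef_conjTranspose_mul_mul_eq {A : Matrix n n 𝕜} (hA : IsOfFinOrder A) :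
    ∃ H : Matrix n n 𝕜, H.PosDef ∧ Aᴴ * H * A = H := by
  -- Sum the translates of the standard Hermitian form by the powers of `A`.
  refine ⟨∑ i ∈ Finset.range (orderOf A), (A ^ i)ᴴ * A ^ i, ?_, ?_⟩
  · refine Matrix.posDef_sum (Finset.nonempty_range_iff.mpr hA.orderOf_pos.ne') fun i _ => ?_
    exact Matrix.PosDef.conjTranspose_mul_self _
      (Matrix.mulVec_injective_of_isUnit (hA.isUnit.pow i))
  · have hshift (i : ℕ) : Aᴴ * ((A ^ i)ᴴ * A ^ i) * A = (A ^ (i + 1))ᴴ * A ^ (i + 1) := by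
      simp only [pow_succ, Matrix.conjTranspose_mul, Matrix.mul_assoc]
    simp only [Finset.mul_sum, Finset.sum_mul, hshift]
    apply add_right_cancel (b := (A ^ 0)ᴴ * A ^ 0)
    rw [← Finset.sum_range_succ' (fun i => (A ^ i)ᴴ * A ^ i), Finset.sum_range_succ,
      pow_orderOf_eq_one, pow_zero]

theorem trace_inv_eq_star_trace_of_isOfFinOrder {A : Matrix n n 𝕜} (hA : IsOfFinOrder A) :
    A⁻¹.trace = star A.trace := by
  obtain ⟨H, hH, hinv⟩ := exists_posDef_conjTranspose_mul_mul_eq hA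
  exact trace_inv_eq_star_trace_of_conjTranspose_mul_mul_eq hH.isUnit hinv

theorem character_inv_eq_star {G V : Type*} [Group G] [AddCommGroup V] [Module 𝕜 V]
    [FiniteDimensional 𝕜 V] (ρ : Representation 𝕜 G V) {g : G} (hg : IsOfFinOrder g) :
    ρ.character g⁻¹ = star (ρ.character g) := by
  let b := Module.finBasis 𝕜 V
  let M := (LinearMap.toMatrixAlgEquiv b).toRingEquiv.toMonoidHom.comp ρ
  have htrace (h : G) : ρ.character h = (M h).trace := LinearMap.trace_eq_matrix_trace 𝕜 b (ρ h)
  have hinv : M g⁻¹ = (M g)⁻¹ :=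
    (Matrix.inv_eq_right_inv (by rw [← map_mul, mul_inv_cancel, map_one])).symm
  rw [htrace, htrace, hinv, trace_inv_eq_star_trace_of_isOfFinOrder (M.isOfFinOrder hg)]

end TraceInverse

theorem IsRootOfUnity.norm_eq_one {z : ℂ} (hz : IsRootOfUnity z) : ‖z‖ = 1 := by
  obtain ⟨n, hn, hzn⟩ := hz
  exact Complex.norm_eq_one_of_pow_eq_one hzn hn.ne'

namespace IsGenChar

variable {G : Type} [Group G] {χ ψ : G → ℂ}

theorem comp (hχ : IsGenChar G χ) {H : Type} [Group H] (f : H →* G) :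
    IsGenChar H (χ ∘ f) := by
  obtain ⟨V, W, hVW⟩ := hχ
  exact ⟨FDRep.of (V.ρ.comp f), FDRep.of (W.ρ.comp f), fun h => hVW (f h)⟩

theorem apply_inv (hχ : IsGenChar G χ) {g : G} (hg : IsOfFinOrder g) :
    χ g⁻¹ = star (χ g) := by
  obtain ⟨V, W, hVW⟩ := hχ
  rw [hVW, hVW, star_sub]
  exact congrArg₂ _ (character_inv_eq_star V.ρ hg) (character_inv_eq_star W.ρ hg)

theorem exists_int_sum_mul_inv_eq_card_mul [Fintype G] (hχ : IsGenChar G χ)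
    (hψ : IsGenChar G ψ) : ∃ m : ℤ, ∑ g, χ g * ψ g⁻¹ = Nat.card G * m := by
  obtain ⟨V, W, hVW⟩ := hχ
  obtain ⟨V', W', hVW'⟩ := hψ
  have hcard : (Nat.card G : ℂ) ≠ 0 := Nat.cast_ne_zero.mpr Nat.card_pos.ne'
  let _ : Invertible (Nat.card G : ℂ) := invertibleOfNonzero hcard
  let mult (X Y : FDRep ℂ G) : ℕ := Module.finrank ℂ (Representation.IntertwiningMap Y.ρ X.ρ)
  have hpair (X Y : FDRep ℂ G) :
      ∑ g, X.character g * Y.character g⁻¹ = Nat.card G * (mult X Y : ℂ) :=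
    (inv_mul_eq_iff_eq_mul₀ hcard).mp
      (Representation.card_inv_mul_sum_char_mul_char_eq_finrank Y.ρ X.ρ)
  refine ⟨mult V V' - mult V W' - (mult W V' - mult W W'), ?_⟩
  simp only [hVW, hVW', sub_mul, mul_sub, Finset.sum_sub_distrib, hpair]
  push_cast
  ring

theorem card_dvd_sub_one_mul_add_one [Finite G] (hχ : IsGenChar G χ) {d : ℤ} (hd : d = χ 1)
    (hnorm : ∀ g ≠ 1, ‖χ g‖ = 1) : (Nat.card G : ℤ) ∣ (d - 1) * (d + 1) := by
  classical
  have := Fintype.ofFinite G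
  have hterm (g : G) : χ g * χ g⁻¹ - 1 = if g = 1 then (d : ℂ) ^ 2 - 1 else 0 := by
    split_ifs with hg
    · rw [hg, inv_one, ← hd, sq]
    · rw [hχ.apply_inv (isOfFinOrder_of_finite g), RCLike.star_def, RCLike.mul_conj, hnorm g hg]
      simp
  obtain ⟨m, hm⟩ := hχ.exists_int_sum_mul_inv_eq_card_mul hχ
  have hsum : (d : ℂ) ^ 2 - 1 = Nat.card G * m - Nat.card G := by
    calc (d : ℂ) ^ 2 - 1 = ∑ g, (χ g * χ g⁻¹ - 1) := by simp [hterm]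
      _ = Nat.card G * m - Nat.card G := by simp [Finset.sum_sub_distrib, hm]
  have hsum_int : d ^ 2 - 1 = Nat.card G * m - Nat.card G := by exact_mod_cast hsum
  exact ⟨m - 1, by linear_combination hsum_int⟩

end IsGenChar

theorem stmt_7_general {G : Type} [Group G] {p : ℕ} (hp : p.Prime) {P : Subgroup G} [Finite P]
    (hP : IsPGroup p P) {χ : G → ℂ} (hχ : IsGenChar G χ) {d : ℤ} (hd : (d : ℂ) = χ 1)
    (hnorm : ∀ x ∈ P, x ≠ 1 → ‖χ x‖ = 1) :
    ((p ≠ 2 ∨ Nat.card P = 2) →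
      ((Nat.card P : ℤ) ∣ d - 1 ∨ (Nat.card P : ℤ) ∣ d + 1)) ∧
    ((p = 2 ∧ 4 ≤ Nat.card P) →
      (((Nat.card P / 2 : ℕ) : ℤ) ∣ d - 1 ∨ ((Nat.card P / 2 : ℕ) : ℤ) ∣ d + 1)) := by
  have hdvd : (Nat.card P : ℤ) ∣ (d - 1) * (d + 1) :=
    (hχ.comp P.subtype).card_dvd_sub_one_mul_add_one hd
      fun x hx => hnorm x x.2 (by simpa using hx)
  have : Fact p.Prime := ⟨hp⟩
  obtain ⟨n, hn⟩ := IsPGroup.iff_card.mp hP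
  refine ⟨?_, ?_⟩
  · rintro (hp2 | hcard)
    · rw [hn, Nat.cast_pow] at hdvd ⊢
      exact odd_prime_pow_dvd_sub_one_or_add_one hp hp2 hdvd
    · rw [hcard] at hdvd ⊢
      exact Int.prime_two.dvd_or_dvd hdvd
  · rintro ⟨rfl, hcard⟩
    obtain _ | n := n
    · lia
    rw [hn, pow_succ, Nat.mul_div_cancel _ two_pos, Nat.cast_pow]
    rw [hn, Nat.cast_pow] at hdvd
    exact two_pow_dvd_sub_one_or_add_one hdvd

theorem stmt_7 (G : Type) [Group G] [Fintype G] (p : ℕ) (hp : p.Prime)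
    (hpG : p ∣ Fintype.card G) (P : Sylow p G)
    (χ : G → ℂ) (hχ : IsGenChar G χ)
    (d : ℤ) (hd : (d : ℂ) = χ 1)
    (hroot : ∀ x : G, x ≠ 1 → (∃ n : ℕ, orderOf x = p ^ n) → IsRootOfUnity (χ x)) :
    ((p ≠ 2 ∨ Nat.card P = 2) →
      ((Nat.card P : ℤ) ∣ d - 1 ∨ (Nat.card P : ℤ) ∣ d + 1)) ∧
    ((p = 2 ∧ 4 ≤ Nat.card P) →
      (((Nat.card P / 2 : ℕ) : ℤ) ∣ d - 1 ∨ ((Nat.card P / 2 : ℕ) : ℤ) ∣ d + 1)) := by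
  have : Fact p.Prime := ⟨hp⟩
  refine stmt_7_general hp P.isPGroup' hχ hd fun x hxP hx => (hroot x hx ?_).norm_eq_one
  simpa using P.isPGroup'.exists_orderOf_eq_pow ⟨x, hxP⟩
end

section
/- Let G be a finite abelian group of odd order, and let λ₁, λ₂, λ₃ : G → ℂˣ be pairwise distinct group homomorphisms (irreducible characters of G). Then there exists g ∈ G such that λ₁(g), λ₂(g), λ₃(g) are pairwise distinct. -/
/-!
The places where two distinct homomorphisms agree form a proper subgroup, so a bad choice of
homomorphisms covers the group by three proper subgroups. By B. H. Neumann's lemma the inverse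
indices of the subgroups in a finite cover sum to at least `1`; equality would make those of finite
index pairwise disjoint, whereas subgroups (as opposed to cosets) always share the identity. Hence
one of the three subgroups has index less than `3`, that is, index `2`, and a group of odd order has
no such subgroup.
-/

section Cover

open scoped Pointwise

variable {G ι : Type*} [Group G] {s : Finset ι} {H : ι → Subgroup G}

theorem one_lt_sum_inv_index_of_subgroup_cover (hs : s.Nontrivial)
    (hfin : ∀ i ∈ s, (H i).FiniteIndex) (hcover : ⋃ i ∈ s, (H i : Set G) = Set.univ) :
    1 < ∑ i ∈ s, ((H i).index : ℚ)⁻¹ := by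
  classical
  have hcoset : ⋃ i ∈ s, (1 : G) • (H i : Set G) = Set.univ := by
    simpa only [one_smul] using hcover
  refine (Subgroup.one_le_sum_inv_index_of_leftCoset_cover hcoset).lt_of_ne' fun hsum => ?_
  have hdisj := Subgroup.pairwiseDisjoint_leftCoset_cover_of_sum_inv_index_eq_one hcoset hsum
  simp only [one_smul, Finset.filter_true_of_mem hfin] at hdisj
  obtain ⟨i, hi, j, hj, hij⟩ := hs
  exact Set.disjoint_left.mp (hdisj hi hj hij) (one_mem (H i)) (one_mem (H j))

theorem exists_index_lt_card_of_subgroup_cover (hs : s.Nontrivial)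
    (hcover : ⋃ i ∈ s, (H i : Set G) = Set.univ) :
    ∃ i ∈ s, (H i).FiniteIndex ∧ (H i).index < s.card := by
  by_contra! hlarge
  have hcard : (0 : ℚ) < s.card := Nat.cast_pos.mpr hs.nonempty.card_pos
  have hle : ∀ i ∈ s, ((H i).index : ℚ)⁻¹ ≤ (s.card : ℚ)⁻¹ := by
    intro i hi
    by_cases hfin : (H i).FiniteIndex
    · exact inv_anti₀ hcard (Nat.cast_le.mpr (hlarge i hi hfin))
    · simp [Subgroup.not_finiteIndex_iff.mp hfin]
  have hone : ∑ _i ∈ s, (s.card : ℚ)⁻¹ = 1 := by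
    rw [Finset.sum_const, nsmul_eq_mul, mul_inv_cancel₀ hcard.ne']
  by_cases hfin : ∀ i ∈ s, (H i).FiniteIndex
  · exact (one_lt_sum_inv_index_of_subgroup_cover hs hfin hcover).not_ge
      ((Finset.sum_le_sum hle).trans_eq hone)
  · push Not at hfin
    obtain ⟨i, hi, hinf⟩ := hfin
    have hlt : ((H i).index : ℚ)⁻¹ < (s.card : ℚ)⁻¹ := by
      simpa [Subgroup.not_finiteIndex_iff.mp hinf] using hcard
    have hcoset : ⋃ i ∈ s, (1 : G) • (H i : Set G) = Set.univ := by
      simpa only [one_smul] using hcover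
    exact (Subgroup.one_le_sum_inv_index_of_leftCoset_cover hcoset).not_gt
      ((Finset.sum_lt_sum hle ⟨i, hi, hlt⟩).trans_eq hone)

end Cover

theorem exists_forall_apply_ne {G M ι : Type*} [Group G] [Monoid M] [Fintype ι] [Nontrivial ι]
    (hindex : ∀ K : Subgroup G, K ≠ ⊤ → K.FiniteIndex → Fintype.card ι ≤ K.index)
    {f g : ι → G →* M} (hfg : ∀ i, f i ≠ g i) : ∃ x, ∀ i, f i x ≠ g i x := by
  by_contra! hagree
  have hcover : ⋃ i ∈ Finset.univ, ((f i).eqLocus (g i) : Set G) = Set.univ := by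
    refine Set.eq_univ_of_forall fun x => ?_
    obtain ⟨i, hi⟩ := hagree x
    exact Set.mem_iUnion₂_of_mem (Finset.mem_univ i) hi
  obtain ⟨i, -, hfin, hlt⟩ :=
    exists_index_lt_card_of_subgroup_cover Finset.univ_nontrivial hcover
  have hproper : (f i).eqLocus (g i) ≠ ⊤ := fun htop =>
    hfg i (MonoidHom.eq_of_eqOn_top htop.ge)
  exact hlt.not_ge (hindex _ hproper hfin)

theorem index_ne_two_of_odd_card {G : Type*} [Group G] (hodd : Odd (Nat.card G))
    (K : Subgroup G) : K.index ≠ 2 := fun htwo =>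
  Nat.not_odd_iff_even.mpr even_two (htwo ▸ hodd.of_dvd_nat K.index_dvd_card)

theorem stmt_8_general {G M : Type*} [Group G] [Monoid M]
    (hindex : ∀ K : Subgroup G, K.index ≠ 2) {f₁ f₂ f₃ : G →* M}
    (h12 : f₁ ≠ f₂) (h13 : f₁ ≠ f₃) (h23 : f₂ ≠ f₃) :
    ∃ g : G, f₁ g ≠ f₂ g ∧ f₁ g ≠ f₃ g ∧ f₂ g ≠ f₃ g := by
  have hthree (K : Subgroup G) (hK : K ≠ ⊤) (hfin : K.FiniteIndex) :
      Fintype.card (Fin 3) ≤ K.index := by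
    have hzero := hfin.index_ne_zero
    have hone := mt Subgroup.index_eq_one.mp hK
    have htwo := hindex K
    rw [Fintype.card_fin]
    omega
  have hne : ∀ i, ![f₁, f₁, f₂] i ≠ ![f₂, f₃, f₃] i := by
    simpa [Fin.forall_fin_succ] using ⟨h12, h13, h23⟩
  simpa [Fin.forall_fin_succ] using exists_forall_apply_ne hthree hne

theorem stmt_8 {G : Type*} [CommGroup G] [Fintype G]
    (hodd : Odd (Fintype.card G))
    (lam₁ lam₂ lam₃ : G →* ℂˣ)
    (h12 : lam₁ ≠ lam₂) (h13 : lam₁ ≠ lam₃) (h23 : lam₂ ≠ lam₃) :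
    ∃ g : G, lam₁ g ≠ lam₂ g ∧ lam₁ g ≠ lam₃ g ∧ lam₂ g ≠ lam₃ g :=
  stmt_8_general (index_ne_two_of_odd_card (Fintype.card_eq_nat_card ▸ hodd)) h12 h13 h23
end

section
/- Let G be a finite group and let χ be a generalized character of G, with (integer) virtual degree d = χ(1), such that χ(x) is a sum of at most two roots of unity for every nonidentity x ∈ G. Then for every prime p dividing |G| there exists an integer a ∈ {−2, −1, 0, 1, 2} such that d ≡ a (mod p). -/
/-!
Choose `x ≠ 1` with `x ^ p = 1`, so that `χ x` is a sum of `p`-th roots of unity, counted with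
signs that add up to `d`, and write `χ x` as the sum of a multiset `s` of at most two roots of
unity, empty if `χ x = 0`. Let `q` be a power of `p` so large that the `q`-th powers of the elements
of `s` have order prime to `p`. Comparing the `q`-th powers of both expressions for `χ x` gives
`∑ u ∈ s, u ^ q ≡ d` modulo `p` times the algebraic integers. It remains to see that the left-hand
side is an integer, which is then at most `2` in absolute value. An automorphism fixing the `q`-th
roots of unity fixes `χ x`, hence permutes `s`, because two roots of unity with nonzero sum are
determined by that sum; and such automorphisms act on the roots of unity of order prime to `p` as
the full Galois group does.
-/

section Frobenius

variable {R : Type*} [CommRing R] {p : ℕ}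

theorem dvd_sum_pow_sub_sum_map_pow (hp : p.Prime) (n : ℕ) (s : Multiset R) :
    (p : R) ∣ s.sum ^ p ^ n - (s.map (· ^ p ^ n)).sum := by
  induction s using Multiset.induction_on with
  | empty => simp [hp.ne_zero]
  | cons u s ih =>
    obtain ⟨c, hc⟩ := ih
    obtain ⟨r, hr⟩ := exists_add_pow_prime_pow_eq hp u s.sum n
    rw [Multiset.sum_cons, Multiset.map_cons, Multiset.sum_cons]
    exact ⟨u * s.sum * r + c, by linear_combination hr + hc⟩

theorem dvd_sum_map_pow_sub_of_sum_eq (hp : p.Prime) (n : ℕ) {s t : Multiset R}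
    (hst : s.sum = t.sum) :
    (p : R) ∣ (s.map (· ^ p ^ n)).sum - (t.map (· ^ p ^ n)).sum := by
  have hs := dvd_sum_pow_sub_sum_map_pow hp n s
  have ht := dvd_sum_pow_sub_sum_map_pow hp n t
  rw [hst] at hs
  simpa using dvd_sub ht hs

theorem exists_isIntegral_sum_map_pow_sub_eq (hp : p.Prime) (n : ℕ) {s t : Multiset R}
    (hs : ∀ u ∈ s, IsIntegral ℤ u) (ht : ∀ u ∈ t, IsIntegral ℤ u) (hst : s.sum = t.sum) :
    ∃ r : R, IsIntegral ℤ r ∧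
      (s.map (· ^ p ^ n)).sum - (t.map (· ^ p ^ n)).sum = p * r := by
  lift s to Multiset (integralClosure ℤ R) using hs
  lift t to Multiset (integralClosure ℤ R) using ht
  have hst' : s.sum = t.sum := Subtype.ext (by simpa [map_multiset_sum] using hst)
  obtain ⟨r, hr⟩ := dvd_sum_map_pow_sub_of_sum_eq hp n hst'
  refine ⟨r, r.2, ?_⟩
  simpa [map_multiset_sum, Multiset.map_map] using congrArg (integralClosure ℤ R).val hr

end Frobenius

section IntegralRationals

variable {K : Type*} [Field K] [CharZero K]

theorem exists_intCast_eq_of_isIntegral_ratCast {r : ℚ} (hr : IsIntegral ℤ (r : K)) :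
    ∃ a : ℤ, (a : ℚ) = r :=
  IsIntegrallyClosed.isIntegral_iff.1 <|
    (isIntegral_algebraMap_iff (algebraMap ℚ K).injective).1 hr

theorem dvd_of_intCast_eq_mul_isIntegral {a b : ℤ} {r : K} (hr : IsIntegral ℤ r)
    (h : (a : K) = b * r) : b ∣ a := by
  rcases eq_or_ne b 0 with rfl | hb
  · simpa using h
  have hb' : (b : K) ≠ 0 := Int.cast_ne_zero.2 hb
  have hr_rat : r = ((a / b : ℚ) : K) := by
    push_cast
    rw [h, mul_div_cancel_left₀ _ hb']
  obtain ⟨c, hc⟩ := exists_intCast_eq_of_isIntegral_ratCast (hr_rat ▸ hr)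
  refine ⟨c, ?_⟩
  rw [eq_div_iff (Int.cast_ne_zero.2 hb)] at hc
  exact_mod_cast hc.symm.trans (mul_comm _ _)

end IntegralRationals

theorem isIntegral_of_isOfFinOrder {R : Type*} [CommRing R] {u : R} (hu : IsOfFinOrder u) :
    IsIntegral ℤ u := by
  obtain ⟨n, hn, h⟩ := hu.exists_pow_eq_one
  exact .of_pow hn (h ▸ isIntegral_one)

/-- A multiset of roots of unity is rigid if no other multiset of as many roots of unity has the
same sum. Ring automorphisms fixing the sum then permute the multiset. -/
structure IsRigid {R : Type*} [CommRing R] (s : Multiset R) : Prop where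
  isOfFinOrder : ∀ u ∈ s, IsOfFinOrder u
  eq_of_sum_eq : ∀ t : Multiset R, (∀ u ∈ t, IsOfFinOrder u) → t.card = s.card →
    t.sum = s.sum → t = s

namespace IsRigid

variable {R S : Type*} [CommRing R] [CommRing S]

theorem zero : IsRigid (0 : Multiset R) where
  isOfFinOrder := by simp
  eq_of_sum_eq _ _ hcard _ := Multiset.card_eq_zero.1 hcard

theorem singleton {u : R} (hu : IsOfFinOrder u) : IsRigid {u} where
  isOfFinOrder := by simpa using hu
  eq_of_sum_eq t _ hcard hsum := by
    obtain ⟨v, rfl⟩ := Multiset.card_eq_one.1 hcard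
    simpa using hsum

theorem of_map {f : R →+* S} (hf : Function.Injective f) {s : Multiset R}
    (hs : IsRigid (s.map f)) : IsRigid s where
  isOfFinOrder u hu :=
    (Function.Injective.isOfFinOrder_iff (f := (f : R →* S)) hf).1
      (hs.isOfFinOrder _ (Multiset.mem_map_of_mem f hu))
  eq_of_sum_eq t ht hcard hsum := by
    refine Multiset.map_injective hf (hs.eq_of_sum_eq _ ?_ (by simpa using hcard) ?_)
    · simpa using fun u hu => (f : R →* S).isOfFinOrder (ht u hu)
    · rw [← map_multiset_sum, ← map_multiset_sum, hsum]

theorem map_eq {s : Multiset R} (hs : IsRigid s) {f : R →+* R} (hf : f s.sum = s.sum) :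
    s.map f = s := by
  refine hs.eq_of_sum_eq _ ?_ (Multiset.card_map _ _) (by rw [← map_multiset_sum, hf])
  simpa using fun u hu => (f : R →* R).isOfFinOrder (hs.isOfFinOrder u hu)

/-- The sum determines the product, because the conjugate of `u + v` is `(u + v) / (u * v)`. -/
theorem pair {u v : ℂ} (hu : IsOfFinOrder u) (hv : IsOfFinOrder v) (huv : u + v ≠ 0) :
    IsRigid {u, v} where
  isOfFinOrder := by simpa using ⟨hu, hv⟩
  eq_of_sum_eq t ht hcard hsum := by
    obtain ⟨x, y, rfl⟩ := Multiset.card_eq_two.1 hcard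
    have hx : IsOfFinOrder x := ht x (by simp)
    have hy : IsOfFinOrder y := ht y (by simp)
    replace hsum : x + y = u + v := by simpa using hsum
    have conj_mul {z : ℂ} (hz : IsOfFinOrder z) : starRingEnd ℂ z * z = 1 := by
      rw [Complex.conj_mul', hz.norm_eq_one]; simp
    have hconj : starRingEnd ℂ x + starRingEnd ℂ y = starRingEnd ℂ u + starRingEnd ℂ v := by
      rw [← map_add, hsum, map_add]
    have hprod : x * y = u * v := by
      refine mul_right_cancel₀ ((map_ne_zero (starRingEnd ℂ)).2 huv) ?_
      rw [map_add]
      linear_combination hsum + y * conj_mul hx + x * conj_mul hy - v * conj_mul hu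
        - u * conj_mul hv - x * y * hconj
    have hroots : (x - u) * (x - v) = 0 := by linear_combination x * hsum - hprod
    rcases mul_eq_zero.1 hroots with h | h <;> obtain rfl := sub_eq_zero.1 h
    · rw [add_left_cancel hsum]
    · rw [Multiset.pair_comm, add_left_cancel (hsum.trans (add_comm _ _))]

end IsRigid

theorem IsSumAtMostTwoRootsOfUnity.exists_isRigid {z : ℂ} (hz : IsSumAtMostTwoRootsOfUnity z) :
    ∃ s : Multiset ℂ, IsRigid s ∧ s.card ≤ 2 ∧ s.sum = z := by
  rcases eq_or_ne z 0 with rfl | hz0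
  · exact ⟨0, .zero, by simp, by simp⟩
  rcases hz with h | hz | ⟨u, v, hu, hv, rfl⟩
  · exact absurd h hz0
  · exact ⟨{z}, .singleton (isOfFinOrder_iff_pow_eq_one.2 hz), by simp, by simp⟩
  · exact ⟨{u, v}, .pair (isOfFinOrder_iff_pow_eq_one.2 hu) (isOfFinOrder_iff_pow_eq_one.2 hv) hz0,
      by simp, by simp⟩

section Cyclotomic

variable {L : Type*} [Field L] [CharZero L] {a b : ℕ}

theorem exists_algEquiv_apply_eq_pow {n : ℕ} [NeZero n] [IsCyclotomicExtension {n} ℚ L] {c : ℕ}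
    (hc : c.Coprime n) : ∃ σ : Gal(L/ℚ), ∀ z : L, z ^ n = 1 → σ z = z ^ c := by
  have : NumberField L := IsCyclotomicExtension.numberField {n} ℚ L
  refine ⟨(IsCyclotomicExtension.Rat.galEquivZMod n L).symm (ZMod.unitOfCoprime c hc),
    fun z hz => ?_⟩
  rw [IsCyclotomicExtension.Rat.galEquivZMod_apply_of_pow_eq n L _ hz, MulEquiv.apply_symm_apply,
    ZMod.coe_unitOfCoprime, ZMod.val_natCast, ← pow_eq_pow_mod c hz]

theorem exists_coprime_forall_apply_eq_pow {n : ℕ} [NeZero n] [IsCyclotomicExtension {n} ℚ L]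
    (σ : Gal(L/ℚ)) : ∃ c : ℕ, c.Coprime n ∧ ∀ z : L, z ^ n = 1 → σ z = z ^ c :=
  have : NumberField L := IsCyclotomicExtension.numberField {n} ℚ L
  ⟨_, ZMod.val_coe_unit_coprime (IsCyclotomicExtension.Rat.galEquivZMod n L σ), fun _ =>
    IsCyclotomicExtension.Rat.galEquivZMod_apply_of_pow_eq n L σ⟩

theorem exists_algEquiv_apply_eq_self_and_apply_eq [NeZero (a * b)]
    [IsCyclotomicExtension {a * b} ℚ L] (hab : a.Coprime b) (τ : Gal(L/ℚ)) :
    ∃ σ : Gal(L/ℚ), (∀ z : L, z ^ a = 1 → σ z = z) ∧ ∀ z : L, z ^ b = 1 → σ z = τ z := by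
  obtain ⟨c, hc, hτ⟩ := exists_coprime_forall_apply_eq_pow (n := a * b) τ
  obtain ⟨e, hea, heb⟩ := Nat.chineseRemainder hab 1 c
  have he : e.Coprime (a * b) := Nat.Coprime.mul_right
    (by simpa [Nat.Coprime] using hea.gcd_eq) (heb.gcd_eq.trans (hc.coprime_mul_left_right))
  obtain ⟨σ, hσ⟩ := exists_algEquiv_apply_eq_pow (L := L) he
  refine ⟨σ, fun z hz => ?_, fun z hz => ?_⟩
  · rw [hσ z (by rw [pow_mul, hz, one_pow]), pow_eq_pow_of_modEq hea hz, pow_one]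
  · have hz' : z ^ (a * b) = 1 := by rw [mul_comm, pow_mul, hz, one_pow]
    rw [hσ z hz', hτ z hz', pow_eq_pow_of_modEq heb hz]

/-- Given `τ`, choose `σ` that fixes `ℚ(ζ_a)` and agrees with `τ` on `ℚ(ζ_b)`: it permutes `s`, and
the `a`-th powers of the elements of `s` lie in `ℚ(ζ_b)`, so `τ` fixes their sum. -/
theorem IsRigid.sum_map_pow_mem_range [NeZero (a * b)] [IsCyclotomicExtension {a * b} ℚ L]
    (hab : a.Coprime b) {s : Multiset L} (hs : IsRigid s) (hpow : ∀ u ∈ s, u ^ (a * b) = 1)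
    (hsum : s.sum ∈ Algebra.adjoin ℚ {z : L | z ^ a = 1}) :
    (s.map (· ^ a)).sum ∈ Set.range (algebraMap ℚ L) := by
  have : IsGalois ℚ L := IsCyclotomicExtension.isGalois {a * b} ℚ L
  have : FiniteDimensional ℚ L := IsCyclotomicExtension.finiteDimensional {a * b} ℚ L
  refine (IsGalois.mem_range_algebraMap_iff_fixed _).2 fun τ => ?_
  obtain ⟨σ, hσa, hσb⟩ := exists_algEquiv_apply_eq_self_and_apply_eq hab τ
  have hσs : s.map σ = s := hs.map_eq (f := (σ : L →+* L)) <|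
    AlgHom.adjoin_le_equalizer (σ : L →ₐ[ℚ] L) (AlgHom.id ℚ L) hσa hsum
  calc τ (s.map (· ^ a)).sum
      = (s.map fun u => σ (u ^ a)).sum := by
        rw [map_multiset_sum, Multiset.map_map]
        exact congrArg _ <| Multiset.map_congr rfl fun u hu =>
          (hσb _ (by rw [← pow_mul, hpow u hu])).symm
    _ = ((s.map σ).map (· ^ a)).sum := by simp only [Multiset.map_map, Function.comp_def, map_pow]
    _ = (s.map (· ^ a)).sum := by rw [hσs]

end Cyclotomic

theorem IsRigid.exists_ratCast_eq_sum_map_pow {K : Type*} [Field K] [CharZero K] [IsAlgClosed K]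
    {a b : ℕ} (ha : 0 < a) (hb : 0 < b) (hab : a.Coprime b) {s : Multiset K} (hs : IsRigid s)
    (hpow : ∀ u ∈ s, u ^ (a * b) = 1)
    (hsum : s.sum ∈ Algebra.adjoin ℚ {z : K | z ^ a = 1}) :
    ∃ r : ℚ, (r : K) = (s.map (· ^ a)).sum := by
  have : NeZero (a * b) := ⟨(Nat.mul_pos ha hb).ne'⟩
  obtain ⟨ζ, hζ⟩ := HasEnoughRootsOfUnity.exists_primitiveRoot K (a * b)
  let L := IntermediateField.adjoin ℚ {ζ}
  have : IsCyclotomicExtension {a * b} ℚ L :=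
    (IntermediateField.isCyclotomicExtension_singleton_iff_eq_adjoin (a * b) ℚ K L hζ).2 rfl
  have mem_L {z : K} (hz : z ^ (a * b) = 1) : z ∈ L := by
    obtain ⟨i, -, rfl⟩ := hζ.eq_pow_of_pow_eq_one hz
    exact pow_mem (IntermediateField.mem_adjoin_simple_self ℚ ζ) i
  have himage : {z : K | z ^ a = 1} = L.val '' {z : L | z ^ a = 1} := by
    ext z
    constructor
    · intro hz
      exact ⟨⟨z, mem_L (by rw [pow_mul, show z ^ a = 1 from hz, one_pow])⟩, Subtype.ext hz, rfl⟩
    · rintro ⟨y, hy, rfl⟩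
      exact congrArg L.val hy
  lift s to Multiset L using fun u hu => mem_L (hpow u hu)
  have hs' : IsRigid s := .of_map (f := algebraMap L K) (algebraMap L K).injective hs
  have hpow' : ∀ u ∈ s, u ^ (a * b) = 1 := fun u hu =>
    Subtype.ext (hpow _ (Multiset.mem_map_of_mem _ hu))
  have hsum' : s.sum ∈ Algebra.adjoin ℚ {z : L | z ^ a = 1} := by
    rw [himage, ← AlgHom.map_adjoin] at hsum
    obtain ⟨y, hy, hys⟩ := hsum
    rwa [L.val.injective (hys.trans (map_multiset_sum L.val s).symm)] at hy
  obtain ⟨r, hr⟩ := hs'.sum_map_pow_mem_range hab hpow' hsum'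
  exact ⟨r, by
    simpa [map_multiset_sum, Multiset.map_map, Function.comp_def] using congrArg L.val hr⟩

theorem exists_pos_forall_mem_pow_eq_one {M : Type*} [Monoid M] {s : Multiset M}
    (hs : ∀ u ∈ s, IsOfFinOrder u) : ∃ n : ℕ, 0 < n ∧ ∀ u ∈ s, u ^ n = 1 := by
  refine ⟨(s.map orderOf).prod, ?_, fun u hu => ?_⟩
  · simpa [Nat.pos_iff_ne_zero, Multiset.prod_eq_zero_iff, orderOf_eq_zero_iff] using hs
  · exact orderOf_dvd_iff_pow_eq_one.1 (Multiset.dvd_prod (Multiset.mem_map_of_mem _ hu))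

theorem norm_sum_le_card_of_isOfFinOrder {s : Multiset ℂ} (hs : ∀ u ∈ s, IsOfFinOrder u) :
    ‖s.sum‖ ≤ s.card := by
  have hle : ∀ x ∈ s.map (‖·‖), x ≤ 1 := by simpa using fun u hu => (hs u hu).norm_eq_one.le
  simpa using (norm_multiset_sum_le s).trans (Multiset.sum_le_card_nsmul _ 1 hle)

theorem IsRigid.exists_intCast_eq_sum_map_pow {p : ℕ} (hp : p.Prime) (k : ℕ) {s : Multiset ℂ}
    (hs : IsRigid s) (hsum : s.sum ∈ Algebra.adjoin ℚ {z : ℂ | z ^ p ^ k = 1}) :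
    ∃ n ≥ k, ∃ a : ℤ, |a| ≤ s.card ∧ (a : ℂ) = (s.map (· ^ p ^ n)).sum := by
  obtain ⟨N, hN, hpow⟩ := exists_pos_forall_mem_pow_eq_one hs.isOfFinOrder
  obtain ⟨j, b, hpb, rfl⟩ := Nat.exists_eq_pow_mul_and_not_dvd hN.ne' p hp.ne_one
  refine ⟨k + j, k.le_add_right j, ?_⟩
  have hpow' : ∀ u ∈ s, u ^ (p ^ (k + j) * b) = 1 := fun u hu => by
    rw [pow_add, mul_assoc, mul_comm, pow_mul, hpow u hu, one_pow]
  have hsub : {z : ℂ | z ^ p ^ k = 1} ⊆ {z | z ^ p ^ (k + j) = 1} :=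
    fun z (hz : z ^ p ^ k = 1) => show z ^ p ^ (k + j) = 1 by rw [pow_add, pow_mul, hz, one_pow]
  obtain ⟨r, hr⟩ := hs.exists_ratCast_eq_sum_map_pow (pow_pos hp.pos _)
    (Nat.pos_of_mul_pos_left hN) (((hp.coprime_iff_not_dvd).2 hpb).pow_left _) hpow'
    (Algebra.adjoin_mono hsub hsum)
  have hfin : ∀ u ∈ s.map (· ^ p ^ (k + j)), IsOfFinOrder u :=
    Multiset.forall_mem_map_iff.2 fun u hu => (hs.isOfFinOrder u hu).pow
  obtain ⟨a, rfl⟩ := exists_intCast_eq_of_isIntegral_ratCast (K := ℂ) <|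
    hr ▸ IsIntegral.multiset_sum fun u hu => isIntegral_of_isOfFinOrder (hfin u hu)
  refine ⟨a, ?_, by simpa using hr⟩
  have hnorm : ‖(a : ℂ)‖ ≤ s.card := by
    simpa [← hr] using norm_sum_le_card_of_isOfFinOrder hfin
  rw [Complex.norm_intCast] at hnorm
  exact_mod_cast hnorm

theorem IsRigid.exists_abs_le_card_and_dvd_sub {p k : ℕ} (hp : p.Prime) {s t t' : Multiset ℂ}
    (hs : IsRigid s) (ht : ∀ z ∈ t, z ^ p ^ k = 1) (ht' : ∀ z ∈ t', z ^ p ^ k = 1)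
    (h : s.sum = t.sum - t'.sum) :
    ∃ a : ℤ, |a| ≤ s.card ∧ (p : ℤ) ∣ (t.card - t'.card : ℤ) - a := by
  have hsum : s.sum ∈ Algebra.adjoin ℚ {z : ℂ | z ^ p ^ k = 1} := h ▸ sub_mem
    (multiset_sum_mem _ fun z hz => Algebra.subset_adjoin (ht z hz))
    (multiset_sum_mem _ fun z hz => Algebra.subset_adjoin (ht' z hz))
  obtain ⟨n, hkn, a, ha, has⟩ := hs.exists_intCast_eq_sum_map_pow hp k hsum
  have sum_map_pow {t : Multiset ℂ} (ht : ∀ z ∈ t, z ^ p ^ k = 1) :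
      (t.map (· ^ p ^ n)).sum = t.card := by
    have pow_eq_one {z : ℂ} (hz : z ∈ t) : z ^ p ^ n = 1 := orderOf_dvd_iff_pow_eq_one.1 <|
      (orderOf_dvd_of_pow_eq_one (ht z hz)).trans (pow_dvd_pow p hkn)
    rw [Multiset.map_congr rfl fun z hz => pow_eq_one hz]
    simp
  have isIntegral {t : Multiset ℂ} (ht : ∀ z ∈ t, z ^ p ^ k = 1) : ∀ z ∈ t, IsIntegral ℤ z :=
    fun z hz => .of_pow (pow_pos hp.pos k) (ht z hz ▸ isIntegral_one)
  obtain ⟨r, hr, hrp⟩ := exists_isIntegral_sum_map_pow_sub_eq hp n (s := t) (t := s + t')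
    (isIntegral ht)
    (fun u hu => (Multiset.mem_add.1 hu).elim
      (fun hus => isIntegral_of_isOfFinOrder (hs.isOfFinOrder u hus)) (isIntegral ht' u))
    (by rw [Multiset.sum_add, h, sub_add_cancel])
  refine ⟨a, ha, dvd_of_intCast_eq_mul_isIntegral hr ?_⟩
  rw [Multiset.map_add, Multiset.sum_add, sum_map_pow ht, sum_map_pow ht', ← has] at hrp
  push_cast
  linear_combination hrp

theorem eq_one_of_hasEigenvalue_one {k V : Type*} [Field k] [AddCommGroup V] [Module k V]
    {c : k} (h : (1 : Module.End k V).HasEigenvalue c) : c = 1 := by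
  obtain ⟨v, hv⟩ := h.exists_hasEigenvector
  have : (c - 1) • v = 0 := by rw [sub_smul, ← hv.apply_eq_smul]; simp
  exact sub_eq_zero.1 ((smul_eq_zero.1 this).resolve_right hv.2)

theorem exists_character_eq_sum {k G : Type*} [Field k] [IsAlgClosed k] [Monoid G]
    (V : FDRep k G) {x : G} {n : ℕ} (hx : x ^ n = 1) :
    ∃ s : Multiset k, (∀ z ∈ s, z ^ n = 1) ∧ V.character x = s.sum ∧ V.character 1 = s.card := by
  have hsplits : (V.ρ x).charpoly.Splits := IsAlgClosed.splits _
  refine ⟨(V.ρ x).charpoly.roots, fun z hz => ?_,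
    Module.End.trace_eq_sum_roots_charpoly_of_splits hsplits, ?_⟩
  · have hz_eigen : Module.End.HasEigenvalue (V.ρ x) z :=
      (Module.End.hasEigenvalue_iff_isRoot_charpoly _ _).2 (Polynomial.isRoot_of_mem_roots hz)
    have hzn_eigen := hz_eigen.pow n
    rw [← map_pow, hx, map_one] at hzn_eigen
    exact eq_one_of_hasEigenvalue_one hzn_eigen
  · rw [FDRep.char_one, ← hsplits.natDegree_eq_card_roots, LinearMap.charpoly_natDegree]

theorem IsGenChar.exists_eq_sum_sub_sum {G : Type} [Group G] {χ : G → ℂ} (hχ : IsGenChar G χ)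
    {x : G} {n : ℕ} (hx : x ^ n = 1) :
    ∃ s t : Multiset ℂ, (∀ z ∈ s, z ^ n = 1) ∧ (∀ z ∈ t, z ^ n = 1) ∧
      χ x = s.sum - t.sum ∧ χ 1 = s.card - t.card := by
  obtain ⟨V, W, hVW⟩ := hχ
  obtain ⟨s, hs, hVx, hV1⟩ := exists_character_eq_sum V hx
  obtain ⟨t, ht, hWx, hW1⟩ := exists_character_eq_sum W hx
  exact ⟨s, t, hs, ht, by rw [hVW, hVx, hWx], by rw [hVW, hV1, hW1]⟩

theorem stmt_11_general {G : Type} [Group G] {χ : G → ℂ} (hχ : IsGenChar G χ)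
    {d : ℤ} (hd : (d : ℂ) = χ 1) {p k : ℕ} (hp : p.Prime) {x : G} (hx : x ^ p ^ k = 1)
    (hval : IsSumAtMostTwoRootsOfUnity (χ x)) :
    ∃ a : ℤ, a ∈ ({-2, -1, 0, 1, 2} : Set ℤ) ∧ (p : ℤ) ∣ d - a := by
  obtain ⟨t, t', ht, ht', hχx, hχ1⟩ := hχ.exists_eq_sum_sub_sum hx
  obtain ⟨s, hs, hcard, hsum⟩ := hval.exists_isRigid
  obtain ⟨a, ha, hpa⟩ := hs.exists_abs_le_card_and_dvd_sub hp ht ht' (hsum.trans hχx)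
  obtain rfl : d = t.card - t'.card := by exact_mod_cast hd.trans hχ1
  refine ⟨a, ?_, hpa⟩
  obtain ⟨ha_ge, ha_le⟩ := abs_le.1 (ha.trans (mod_cast hcard) : |a| ≤ 2)
  simp only [Set.mem_insert_iff, Set.mem_singleton_iff]
  omega

theorem stmt_11 (G : Type) [Group G] [Fintype G]
    (χ : G → ℂ) (hχ : IsGenChar G χ)
    (d : ℤ) (hd : (d : ℂ) = χ 1)
    (hval : ∀ x : G, x ≠ 1 → IsSumAtMostTwoRootsOfUnity (χ x)) :
    ∀ p : ℕ, p.Prime → p ∣ Fintype.card G →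
      ∃ a : ℤ, a ∈ ({-2, -1, 0, 1, 2} : Set ℤ) ∧ (p : ℤ) ∣ d - a := by
  intro p hp hdvd
  have : Fact p.Prime := ⟨hp⟩
  obtain ⟨x, hx⟩ := exists_prime_orderOf_dvd_card p hdvd
  have hx1 : x ≠ 1 := fun h => hp.ne_one (by rw [← hx, h, orderOf_one])
  exact stmt_11_general hχ hd hp (k := 1) (by rw [pow_one, ← hx, pow_orderOf_eq_one]) (hval x hx1)
end

section
/- Let G be a finite group and let χ be a generalized character of G, with (integer) virtual degree d = χ(1), such that χ(x) is a sum of at most two roots of unity for every nonidentity x ∈ G. Let p and q be primes dividing |G| with p ≥ 5 and q ≥ 5, and suppose G contains an element of order p·q. If a, b ∈ {−2, −1, 0, 1, 2} satisfy d ≡ a (mod p) and d ≡ b (mod q), then a = b. (Consequently, for each i ∈ {−2,…,2} the set π_i of primes p ≥ 5 dividing |G| with d ≡ i (mod p) induces a union of connected components of the subgraph of the prime graph of G on the primes ≥ 5.) -/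
/-!
Let `g` have order `p * q` with `p ≠ q`, and let `ω` be a primitive `p * q`-th root of unity.
Counting eigenvalues of `g` gives `f ∈ ℤ[X]` with `χ (g ^ k) = f(ω ^ k)` for all `k`, and so
`f(1) = d`.

Suppose `m` is odd, `η` is a primitive `m`-th root of unity and `z = u + v ∈ ℚ(η)` is a nonzero sum
of two roots of unity. Then `u * v = z / conj z ∈ ℚ(η)`, so `u * v = ± η ^ (2 * j)`, and after
dividing by `η ^ j` we may assume `u * v = ± 1`. If `u ∉ ℚ(η)`, then `u` and `v` are conjugate over
`ℚ(η)`; comparing the powers of `u` and `v` that lie in `ℚ(η)` shows that the order of `u` is prime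
to `m`, so `z = u ± u⁻¹ ∈ ℚ(u) ∩ ℚ(η) = ℚ` is an integer. In all cases `z = E(η)` for an integer
polynomial `E` with at most two terms and `|E(1)| ≤ 2`.

Apply this to `η = ω` and `η = ω ^ p`: there are such `E` and `D` with `Φ_{pq} ∣ f - E` and
`Φ_q ∣ f - D`. Evaluating at `1` gives `d ≡ D(1)` modulo `q`, so `b = D(1)`. Modulo `p` we have
`Φ_{pq} = Φ_q ^ (p - 1)`, so `Φ_q` divides `E - D`, which has at most four terms. Multiples of `Φ_q`
have the same coefficient sum over each residue class of exponents modulo `q`; since `4 < q`, these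
sums are `0`, so `E(1) ≡ D(1)` modulo `p`. Hence `b = D(1) = E(1)`, and `a = E(1)` by symmetry.
-/

open Polynomial IntermediateField ComplexConjugate

/-! ### Character values on a cyclic subgroup -/

section Trace

variable {K V : Type*} [Field K] [AddCommGroup V] [Module K V] [FiniteDimensional K V]
  {A : Module.End K V}

theorem trace_pow_eq_sum_of_isInternal_eigenspace {ι : Type*} [Fintype ι] [DecidableEq ι]
    {μ : ι → K} (h : DirectSum.IsInternal fun i ↦ A.eigenspace (μ i)) (k : ℕ) :
    LinearMap.trace K V (A ^ k) = ∑ i, Module.finrank K (A.eigenspace (μ i)) * μ i ^ k := by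
  have hpow : ∀ i, ∀ x ∈ A.eigenspace (μ i), (A ^ k) x = μ i ^ k • x := fun i x hx ↦ by
    induction k with
    | zero => simp
    | succ k ih =>
      rw [pow_succ, Module.End.mul_apply, Module.End.mem_eigenspace_iff.1 hx, map_smul, ih,
        smul_smul, pow_succ']
  have hmaps : ∀ i, Set.MapsTo (A ^ k) (A.eigenspace (μ i)) (A.eigenspace (μ i)) :=
    fun i x hx ↦ hpow i x hx ▸ Submodule.smul_mem _ _ hx
  rw [LinearMap.trace_eq_sum_trace_restrict h hmaps]
  refine Finset.sum_congr rfl fun i _ ↦ ?_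
  have hrestrict : (A ^ k).restrict (hmaps i) = μ i ^ k • LinearMap.id :=
    LinearMap.ext fun x ↦ Subtype.ext (hpow i x x.2)
  rw [hrestrict, map_smul, LinearMap.trace_id, smul_eq_mul, mul_comm]

theorem isInternal_eigenspace_of_pow_eq_one [IsAlgClosed K] {n : ℕ} [NeZero n] {ω : K}
    (hω : IsPrimitiveRoot ω n) (hA : A ^ n = 1) :
    DirectSum.IsInternal fun j : Fin n ↦ A.eigenspace (ω ^ (j : ℕ)) := by
  have : NeZero (n : K) := hω.neZero'
  have hss : A.IsSemisimple :=
    Module.End.isSemisimple_of_squarefree_aeval_eq_zero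
      (X_pow_sub_one_separable_iff.2 (NeZero.ne (n : K))).squarefree (by simp [hA])
  have hinj : Function.Injective fun j : Fin n ↦ ω ^ (j : ℕ) :=
    fun i j h ↦ Fin.ext (hω.pow_inj i.2 j.2 h)
  refine DirectSum.isInternal_submodule_of_iSupIndep_of_iSup_eq_top
    (A.eigenspaces_iSupIndep.comp hinj) (eq_top_iff.2 ?_)
  rw [← hss.iSup_eigenspace_eq_top]
  refine iSup_le fun μ x hx ↦ ?_
  by_cases hx0 : x = 0
  · simp [hx0]
  have hμ : μ ^ n = 1 := by
    have h := (Module.End.hasEigenvector_iff.2 ⟨hx, hx0⟩).pow_apply n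
    rw [hA, Module.End.one_apply] at h
    exact smul_left_injective K hx0 (h.symm.trans (one_smul K x).symm)
  obtain ⟨j, hj, rfl⟩ := hω.eq_pow_of_pow_eq_one hμ
  exact Submodule.mem_iSup_of_mem ⟨j, hj⟩ hx

theorem exists_trace_pow_eq_aeval [IsAlgClosed K] {n : ℕ} [NeZero n] {ω : K}
    (hω : IsPrimitiveRoot ω n) (hA : A ^ n = 1) :
    ∃ f : ℤ[X], ∀ k : ℕ, LinearMap.trace K V (A ^ k) = aeval (ω ^ k) f := by
  refine ⟨∑ j : Fin n, C (Module.finrank K (A.eigenspace (ω ^ (j : ℕ))) : ℤ) * X ^ (j : ℕ),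
    fun k ↦ ?_⟩
  rw [trace_pow_eq_sum_of_isInternal_eigenspace (isInternal_eigenspace_of_pow_eq_one hω hA)]
  simp [pow_right_comm ω k]

end Trace

theorem IsGenChar.exists_apply_pow_eq_aeval {G : Type} [Group G] {χ : G → ℂ} (hχ : IsGenChar G χ)
    {n : ℕ} [NeZero n] {ω : ℂ} (hω : IsPrimitiveRoot ω n) {g : G} (hg : g ^ n = 1) :
    ∃ f : ℤ[X], ∀ k : ℕ, χ (g ^ k) = aeval (ω ^ k) f := by
  obtain ⟨V, W, hVW⟩ := hχ
  have hchar (U : FDRep ℂ G) : ∃ f : ℤ[X], ∀ k : ℕ, U.character (g ^ k) = aeval (ω ^ k) f := by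
    obtain ⟨f, hf⟩ := exists_trace_pow_eq_aeval hω (A := U.ρ g) (by rw [← map_pow, hg, map_one])
    exact ⟨f, fun k ↦ by rw [← hf k, ← map_pow]; rfl⟩
  obtain ⟨fV, hV⟩ := hchar V
  obtain ⟨fW, hW⟩ := hchar W
  exact ⟨fV - fW, fun k ↦ by rw [hVW, hV, hW, map_sub]⟩

/-! ### Conjugate elements and roots of unity -/

section ConjRoot

variable {K L : Type*} [Field K] [Field L] [Algebra K L] {x y : L}

theorem isConjRoot_of_add_mem_of_mul_mem (hadd : x + y ∈ (algebraMap K L).range)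
    (hmul : x * y ∈ (algebraMap K L).range) (hx : x ∉ (algebraMap K L).range) :
    IsConjRoot K x y := by
  obtain ⟨s, hs⟩ := hadd
  obtain ⟨t, ht⟩ := hmul
  have haeval (w : L) : aeval w (X ^ 2 - C s * X + C t) = (w - x) * (w - y) := by
    simp only [map_add, map_sub, map_mul, map_pow, aeval_X, aeval_C, hs, ht]
    ring
  have hmonic : (X ^ 2 - C s * X + C t).Monic := by monicity!
  have hroot : aeval x (X ^ 2 - C s * X + C t) = 0 := by rw [haeval, sub_self, zero_mul]
  have hint : IsIntegral K x := ⟨_, hmonic, hroot⟩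
  have hmin : X ^ 2 - C s * X + C t = minpoly K x := by
    have hdeg : (X ^ 2 - C s * X + C t).natDegree ≤ (minpoly K x).natDegree :=
      le_trans (by compute_degree) ((minpoly.two_le_natDegree_iff hint).2 hx)
    exact eq_of_monic_of_dvd_of_natDegree_le (minpoly.monic hint) hmonic
      (minpoly.dvd K x hroot) hdeg
  rw [isConjRoot_iff_aeval_eq_zero hint, ← hmin, haeval, sub_self, mul_zero]

theorem pow_eq_pow_of_isConjRoot (h : IsConjRoot K x y) {r : ℕ}
    (hr : x ^ r ∈ (algebraMap K L).range) : y ^ r = x ^ r := by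
  obtain ⟨c, hc⟩ := hr
  have hdvd : minpoly K x ∣ X ^ r - C c := minpoly.dvd K x (by simp [hc])
  have hroot : aeval y (X ^ r - C c) = 0 := aeval_eq_zero_of_dvd_aeval_eq_zero hdvd h.aeval_eq_zero
  simpa [sub_eq_zero, hc] using hroot

end ConjRoot

theorem isIntegral_of_isOfFinOrder_s12 {R A : Type*} [CommRing R] [Ring A] [Algebra R A] {x : A}
    (hx : IsOfFinOrder x) : IsIntegral R x := by
  obtain ⟨n, hn, h⟩ := hx.exists_pow_eq_one
  exact .of_pow hn (h ▸ isIntegral_one)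

theorem isOfFinOrder_div {F : Type*} [DivisionCommMonoid F] {x y : F} (hx : IsOfFinOrder x)
    (hy : IsOfFinOrder y) : IsOfFinOrder (x / y) := by
  obtain ⟨n, hn, h⟩ := hy.exists_pow_eq_one
  have hinv : IsOfFinOrder y⁻¹ :=
    isOfFinOrder_iff_pow_eq_one.2 ⟨n, hn, by rw [inv_pow, h, inv_one]⟩
  exact div_eq_mul_inv x y ▸ hx.mul hinv

theorem exists_pow_eq_sq_pow {M : Type*} [Monoid M] {x : M} {m : ℕ} (hx : x ^ m = 1) (hm : Odd m)
    (i : ℕ) : ∃ j : ℕ, x ^ i = (x ^ j) ^ 2 := by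
  obtain ⟨l, rfl⟩ := hm
  refine ⟨i * (l + 1), ?_⟩
  calc x ^ i = (x ^ (2 * l + 1)) ^ i * x ^ i := by rw [hx, one_pow, one_mul]
    _ = (x ^ (i * (l + 1))) ^ 2 := by rw [← pow_mul, ← pow_add, ← pow_mul]; ring_nf

/-! ### Roots of unity in cyclotomic fields -/

section CyclotomicField

theorem linearDisjoint_adjoin_of_coprime {K L : Type*} [Field K] [Field L] [Algebra K L] {m n : ℕ}
    [NeZero m] [NeZero n] {ω η : L} (hirr : ∀ k : ℕ, 0 < k → Irreducible (cyclotomic k K))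
    (hω : IsPrimitiveRoot ω m) (hη : IsPrimitiveRoot η n) (hmn : m.Coprime n) :
    K⟮ω⟯.LinearDisjoint K⟮η⟯ := by
  have := (isCyclotomicExtension_singleton_iff_eq_adjoin m K L _ hω).2 rfl
  have := (isCyclotomicExtension_singleton_iff_eq_adjoin n K L _ hη).2 rfl
  have := isCyclotomicExtension_lcm_sup K L m n K⟮ω⟯ K⟮η⟯
  have := IsCyclotomicExtension.finite_of_singleton m K K⟮ω⟯
  have := IsCyclotomicExtension.finite_of_singleton n K K⟮η⟯
  have : NeZero (m.lcm n) := ⟨Nat.lcm_ne_zero (NeZero.ne m) (NeZero.ne n)⟩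
  refine LinearDisjoint.of_finrank_sup ?_
  rw [IsCyclotomicExtension.finrank K⟮ω⟯ (hirr m (NeZero.pos m)),
    IsCyclotomicExtension.finrank K⟮η⟯ (hirr n (NeZero.pos n)),
    IsCyclotomicExtension.finrank ↥(K⟮ω⟯ ⊔ K⟮η⟯) (hirr _ (NeZero.pos (m.lcm n))),
    hmn.lcm_eq_mul, Nat.totient_mul hmn]

variable {L : Type*} [Field L] [CharZero L] {m : ℕ} [NeZero m] {ω u v : L}

theorem exists_eq_intCast_mul_pow_of_mem_adjoin (hω : IsPrimitiveRoot ω m) (hm : Odd m)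
    (hu : IsOfFinOrder u) (hmem : u ∈ ℚ⟮ω⟯) : ∃ s : ℤ, |s| = 1 ∧ ∃ i : ℕ, u = s * ω ^ i := by
  have : IsCyclotomicExtension {m} ℚ ℚ⟮ω⟯ :=
    (isCyclotomicExtension_singleton_iff_eq_adjoin m ℚ L _ hω).2 rfl
  have := IsCyclotomicExtension.numberField {m} ℚ ℚ⟮ω⟯
  have hgen : IsPrimitiveRoot (AdjoinSimple.gen ℚ ω) m :=
    IsPrimitiveRoot.coe_submonoidClass_iff.1 hω
  have hfin : IsOfFinOrder (⟨u, hmem⟩ : ℚ⟮ω⟯) :=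
    (Submonoid.isOfFinOrder_coe (H := ℚ⟮ω⟯.toSubmonoid)).1 hu
  obtain ⟨i, -, hi | hi⟩ := hgen.exists_pow_or_neg_mul_pow_of_isOfFinOrder hm hfin
  · exact ⟨1, abs_one, i, by simpa using congrArg Subtype.val hi⟩
  · exact ⟨-1, by simp, i, by simpa using congrArg Subtype.val hi⟩

theorem coprime_orderOf_of_add_mem_adjoin (hω : IsPrimitiveRoot ω m) (hm : Odd m)
    (hu : IsOfFinOrder u) (hmul : (u * v) ^ 2 = 1) (hadd : u + v ∈ ℚ⟮ω⟯) (hmem : u ∉ ℚ⟮ω⟯) :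
    (orderOf u).Coprime m := by
  have hconj : IsConjRoot ℚ⟮ω⟯ u v := by
    have huv : u * v ∈ ℚ⟮ω⟯ := by
      rcases sq_eq_one_iff.1 hmul with h | h <;> simp [h]
    refine isConjRoot_of_add_mem_of_mul_mem ⟨⟨_, hadd⟩, rfl⟩ ⟨⟨_, huv⟩, rfl⟩ ?_
    rintro ⟨w, rfl⟩
    exact hmem w.2
  set e := (orderOf u).gcd m
  obtain ⟨r, hr⟩ : e ∣ orderOf u := Nat.gcd_dvd_left _ _
  have hr0 : 0 < r := Nat.pos_of_mul_pos_left (hr ▸ hu.orderOf_pos)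
  have hord : orderOf (u ^ r) = e := by
    rw [orderOf_pow_of_dvd hr0.ne' (hr ▸ dvd_mul_left r e), hr, Nat.mul_div_cancel _ hr0]
  obtain ⟨i, -, hi⟩ := hω.eq_pow_of_pow_eq_one
    (orderOf_dvd_iff_pow_eq_one.1 (hord ▸ Nat.gcd_dvd_right _ _ : orderOf (u ^ r) ∣ m))
  have hpow : v ^ r = u ^ r :=
    pow_eq_pow_of_isConjRoot hconj ⟨⟨_, pow_mem (mem_adjoin_simple_self ℚ ω) i⟩, hi⟩
  have he : e ∣ 2 ^ 2 := by
    rw [← hord, orderOf_dvd_iff_pow_eq_one]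
    calc (u ^ r) ^ 2 ^ 2 = (u ^ r * v ^ r) ^ 2 := by rw [hpow]; ring
      _ = ((u * v) ^ 2) ^ r := by rw [← mul_pow, pow_right_comm]
      _ = 1 := by rw [hmul, one_pow]
  exact Nat.eq_one_of_dvd_coprimes (hm.coprime_two_right.pow_right 2) (Nat.gcd_dvd_right _ _) he

theorem exists_add_eq_intCast_of_coprime (hω : IsPrimitiveRoot ω m) (hu : IsOfFinOrder u)
    (hv : IsOfFinOrder v) (hmul : (u * v) ^ 2 = 1) (hadd : u + v ∈ ℚ⟮ω⟯)
    (hcop : (orderOf u).Coprime m) : ∃ c : ℤ, u + v = c := by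
  have : NeZero (orderOf u) := ⟨hu.orderOf_pos.ne'⟩
  have hadd' : u + v ∈ ℚ⟮u⟯ := by
    have hmem := mem_adjoin_simple_self ℚ u
    refine add_mem hmem ?_
    rcases sq_eq_one_iff.1 hmul with h | h
    · exact eq_inv_of_mul_eq_one_right h ▸ inv_mem hmem
    · rw [← neg_eq_iff_eq_neg, ← mul_neg] at h
      exact neg_mem_iff.1 (eq_inv_of_mul_eq_one_right h ▸ inv_mem hmem)
  have hbot : ℚ⟮u⟯ ⊓ ℚ⟮ω⟯ = ⊥ :=
    (linearDisjoint_adjoin_of_coprime (fun k ↦ cyclotomic.irreducible_rat) (.orderOf u) hω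
      hcop).inf_eq_bot
  obtain ⟨y, hy⟩ := mem_bot.1 (hbot ▸ ⟨hadd', hadd⟩ : u + v ∈ (⊥ : IntermediateField ℚ L))
  exact ((isIntegral_of_isOfFinOrder_s12 hu).add
    (isIntegral_of_isOfFinOrder_s12 hv)).exists_int_iff_exists_rat.1 ⟨y, by simp [← hy]⟩

end CyclotomicField

/-! ### Sums of two roots of unity in a cyclotomic field -/

theorem mul_mem_of_add_mem {F : Type*} [Field F] [Algebra F ℂ] {K : IntermediateField F ℂ}
    (hK : ∀ x ∈ K, conj x ∈ K) {u v : ℂ} (hu : ‖u‖ = 1) (hv : ‖v‖ = 1) (hadd : u + v ∈ K)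
    (hne : u + v ≠ 0) : u * v ∈ K := by
  have huv : u * v = (u + v) / conj (u + v) := by
    rw [eq_div_iff ((_root_.map_ne_zero _).2 hne), map_add]
    have hu' : u * conj u = 1 := by simp [Complex.mul_conj', hu]
    have hv' : v * conj v = 1 := by simp [Complex.mul_conj', hv]
    linear_combination v * hu' + u * hv'
  exact huv ▸ div_mem hadd (hK _ hadd)

theorem conj_mem_adjoin {F : Type*} [Field F] [Algebra F ℝ] [Algebra F ℂ] [IsScalarTower F ℝ ℂ]
    {ω x : ℂ} (hω : ‖ω‖ = 1) (hx : x ∈ F⟮ω⟯) : conj x ∈ F⟮ω⟯ := by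
  have hle : F⟮ω⟯ ≤ F⟮ω⟯.comap (Complex.conjAe.restrictScalars F : ℂ →ₐ[F] ℂ) := by
    rw [adjoin_simple_le_iff]
    change conj ω ∈ F⟮ω⟯
    rw [← Complex.inv_eq_conj hω]
    exact inv_mem (mem_adjoin_simple_self F ω)
  exact hle hx

/-- An integer polynomial with at most two terms whose value at `1` is at most `2` in absolute
value, such as `± X ^ i ± X ^ j` or `c * X ^ i` with `|c| ≤ 2`. Sums of at most two roots of unity
lying in `ℚ(ω)`, for a root of unity `ω` of odd order, are values of such polynomials at `ω`. -/
structure IsShort (E : ℤ[X]) : Prop where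
  card_support_le : E.support.card ≤ 2
  abs_eval_one_le : |E.eval 1| ≤ 2

theorem isShort_C_mul_X_pow_add {s t : ℤ} (h : |s| + |t| ≤ 2) (i j : ℕ) :
    IsShort (C s * X ^ i + C t * X ^ j) where
  card_support_le := by
    refine (Finset.card_le_card support_add).trans ((Finset.card_union_le _ _).trans ?_)
    exact add_le_add card_support_C_mul_X_pow_le_one card_support_C_mul_X_pow_le_one
  abs_eval_one_le := by simpa using (abs_add_le s t).trans h

theorem isShort_C_mul_X_pow {c : ℤ} (h : |c| ≤ 2) (i : ℕ) : IsShort (C c * X ^ i) := by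
  simpa using isShort_C_mul_X_pow_add (s := c) (t := 0) (by simpa) i 0

section NormalForm

variable {m : ℕ} [NeZero m] {ω u v z : ℂ}

theorem exists_div_mul_div_sq_eq_one (hω : IsPrimitiveRoot ω m) (hm : Odd m) (hu : IsOfFinOrder u)
    (hv : IsOfFinOrder v) (hadd : u + v ∈ ℚ⟮ω⟯) (hne : u + v ≠ 0) :
    ∃ j : ℕ, (u / ω ^ j * (v / ω ^ j)) ^ 2 = 1 := by
  have hnorm : ‖ω‖ = 1 := hω.norm'_eq_one (NeZero.ne m)
  have huv : u * v ∈ ℚ⟮ω⟯ :=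
    mul_mem_of_add_mem (fun x ↦ conj_mem_adjoin hnorm) hu.norm_eq_one hv.norm_eq_one hadd hne
  obtain ⟨s, hs, i, hi⟩ := exists_eq_intCast_mul_pow_of_mem_adjoin hω hm (hu.mul hv) huv
  obtain ⟨j, hj⟩ := exists_pow_eq_sq_pow hω.pow_eq_one hm i
  have hω0 : ω ^ j ≠ 0 := pow_ne_zero j (hω.ne_zero (NeZero.ne m))
  refine ⟨j, ?_⟩
  rw [div_mul_div_comm, hi, hj, ← sq, mul_div_cancel_right₀ _ (pow_ne_zero 2 hω0)]
  exact_mod_cast (sq_abs s).symm.trans (by rw [hs, one_pow])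

theorem exists_isShort_aeval_eq_add_of_mem (hω : IsPrimitiveRoot ω m) (hm : Odd m)
    (hu : IsOfFinOrder u) (hv : IsOfFinOrder v) (hu_mem : u ∈ ℚ⟮ω⟯) (hv_mem : v ∈ ℚ⟮ω⟯) :
    ∃ E, IsShort E ∧ aeval ω E = u + v := by
  obtain ⟨s, hs, i, rfl⟩ := exists_eq_intCast_mul_pow_of_mem_adjoin hω hm hu hu_mem
  obtain ⟨t, ht, j, rfl⟩ := exists_eq_intCast_mul_pow_of_mem_adjoin hω hm hv hv_mem
  exact ⟨_, isShort_C_mul_X_pow_add (s := s) (t := t) (by rw [hs, ht]; norm_num) i j, by simp⟩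

theorem exists_isShort_aeval_eq_add_of_notMem (hω : IsPrimitiveRoot ω m) (hm : Odd m)
    (hu : IsOfFinOrder u) (hv : IsOfFinOrder v) (hadd : u + v ∈ ℚ⟮ω⟯) (hne : u + v ≠ 0)
    (hmem : u ∉ ℚ⟮ω⟯) : ∃ E, IsShort E ∧ aeval ω E = u + v := by
  obtain ⟨j, hj⟩ := exists_div_mul_div_sq_eq_one hω hm hu hv hadd hne
  have hω0 : ω ^ j ≠ 0 := pow_ne_zero j (hω.ne_zero (NeZero.ne m))
  have hωj : ω ^ j ∈ ℚ⟮ω⟯ := pow_mem (mem_adjoin_simple_self ℚ ω) j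
  have hfin : IsOfFinOrder (ω ^ j) :=
    (isOfFinOrder_iff_pow_eq_one.2 ⟨m, NeZero.pos m, hω.pow_eq_one⟩).pow
  have hu' := isOfFinOrder_div hu hfin
  have hv' := isOfFinOrder_div hv hfin
  have hadd' : u / ω ^ j + v / ω ^ j ∈ ℚ⟮ω⟯ := add_div u v _ ▸ div_mem hadd hωj
  have hmem' : u / ω ^ j ∉ ℚ⟮ω⟯ := fun h ↦ hmem (div_mul_cancel₀ u hω0 ▸ mul_mem h hωj)
  obtain ⟨c, hc⟩ := exists_add_eq_intCast_of_coprime hω hu' hv' hj hadd'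
    (coprime_orderOf_of_add_mem_adjoin hω hm hu' hj hadd' hmem')
  have hle : |c| ≤ 2 := by
    have h : ‖(c : ℂ)‖ ≤ 1 + 1 := hc ▸ norm_add_le_of_le hu'.norm_eq_one.le hv'.norm_eq_one.le
    rw [Complex.norm_intCast, one_add_one_eq_two] at h
    exact_mod_cast h
  refine ⟨C c * X ^ j, isShort_C_mul_X_pow hle j, ?_⟩
  calc aeval ω (C c * X ^ j) = (u / ω ^ j + v / ω ^ j) * ω ^ j := by simp [hc]
    _ = u + v := by rw [add_mul, div_mul_cancel₀ u hω0, div_mul_cancel₀ v hω0]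

theorem exists_isShort_aeval_eq (hω : IsPrimitiveRoot ω m) (hm : Odd m)
    (hz : IsSumAtMostTwoRootsOfUnity z) (hmem : z ∈ ℚ⟮ω⟯) : ∃ E, IsShort E ∧ aeval ω E = z := by
  by_cases hz0 : z = 0
  · exact ⟨0, ⟨by simp, by simp⟩, by simp [hz0]⟩
  rcases hz with hz | hz | ⟨u, v, hu, hv, rfl⟩
  · contradiction
  · obtain ⟨s, hs, i, rfl⟩ := exists_eq_intCast_mul_pow_of_mem_adjoin hω hm
      (isOfFinOrder_iff_pow_eq_one.2 hz) hmem
    exact ⟨_, isShort_C_mul_X_pow (by rw [hs]; norm_num) i, by simp⟩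
  · have hu' : IsOfFinOrder u := isOfFinOrder_iff_pow_eq_one.2 hu
    have hv' : IsOfFinOrder v := isOfFinOrder_iff_pow_eq_one.2 hv
    by_cases hu_mem : u ∈ ℚ⟮ω⟯
    · have hv_mem : v ∈ ℚ⟮ω⟯ := (add_mem_cancel_left hu_mem).1 hmem
      exact exists_isShort_aeval_eq_add_of_mem hω hm hu' hv' hu_mem hv_mem
    · exact exists_isShort_aeval_eq_add_of_notMem hω hm hu' hv' hmem hz0 hu_mem

theorem exists_isShort_cyclotomic_dvd_sub (hω : IsPrimitiveRoot ω m) (hm : Odd m) {f : ℤ[X]}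
    (hf : IsSumAtMostTwoRootsOfUnity (aeval ω f)) :
    ∃ E, IsShort E ∧ cyclotomic m ℤ ∣ f - E := by
  have hmem : aeval ω f ∈ ℚ⟮ω⟯ :=
    aeval_algebraMap_apply ℂ (AdjoinSimple.gen ℚ ω) f ▸ SetLike.coe_mem _
  obtain ⟨E, hE, hEf⟩ := exists_isShort_aeval_eq hω hm hf hmem
  refine ⟨E, hE, ?_⟩
  rw [cyclotomic_eq_minpoly hω (NeZero.pos m),
    ← minpoly.isIntegrallyClosed_dvd_iff (hω.isIntegral (NeZero.pos m)), map_sub, hEf, sub_self]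

end NormalForm

theorem IsGenChar.exists_eval_one_eq_forall_cyclotomic_dvd_sub {G : Type} [Group G] {χ : G → ℂ}
    (hχ : IsGenChar G χ) {g : G} (hodd : Odd (orderOf g))
    (hval : ∀ k : ℕ, g ^ k ≠ 1 → IsSumAtMostTwoRootsOfUnity (χ (g ^ k))) :
    ∃ f : ℤ[X], ((f.eval 1 : ℤ) : ℂ) = χ 1 ∧
      ∀ m, 1 < m → m ∣ orderOf g → ∃ E, IsShort E ∧ cyclotomic m ℤ ∣ f - E := by
  have hn : NeZero (orderOf g) := ⟨hodd.pos.ne'⟩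
  have hω := Complex.isPrimitiveRoot_exp (orderOf g) hn.out
  obtain ⟨f, hf⟩ := hχ.exists_apply_pow_eq_aeval hω (pow_orderOf_eq_one g)
  refine ⟨f, by simpa [aeval_def, eval₂_at_one] using (hf 0).symm, fun m hm1 hm ↦ ?_⟩
  have : NeZero m := ⟨(zero_lt_one.trans hm1).ne'⟩
  obtain ⟨s, hs⟩ := id hm
  have hs0 : 0 < s := Nat.pos_of_mul_pos_left (hs ▸ hodd.pos)
  have hgs : g ^ s ≠ 1 :=
    pow_ne_one_of_lt_orderOf hs0.ne' (hs ▸ lt_mul_of_one_lt_left hs0 hm1)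
  exact exists_isShort_cyclotomic_dvd_sub (hω.pow hodd.pos (hs.trans (mul_comm m s)))
    (hodd.of_dvd_nat hm) (hf s ▸ hval s hgs)

/-! ### Comparing sparse polynomials modulo cyclotomic polynomials -/

section ResidueSum

variable {R : Type*} [CommRing R] {q : ℕ}

/-- The sum of the coefficients of a polynomial at the exponents congruent to `r` modulo `q`. For
prime `q` it does not depend on `r` on multiples of `Φ_q`, so it vanishes on sparse multiples. -/
noncomputable def residueSum (q : ℕ) (r : ZMod q) : R[X] →ₗ[R] R :=
  lsum fun n ↦ if (n : ZMod q) = r then LinearMap.id else 0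

theorem residueSum_apply (r : ZMod q) (P : R[X]) :
    residueSum q r P = P.sum fun n a ↦ if (n : ZMod q) = r then a else 0 := by
  simp [residueSum, ite_apply, apply_ite]

theorem residueSum_monomial (r : ZMod q) (n : ℕ) (a : R) :
    residueSum q r (monomial n a) = if (n : ZMod q) = r then a else 0 :=
  (residueSum_apply r _).trans (sum_monomial_index a _ (ite_self 0))

theorem residueSum_cyclotomic_mul (hq : q.Prime) (r : ZMod q) (g : R[X]) :
    residueSum q r (cyclotomic q R * g) = g.eval 1 := by
  have : Fact q.Prime := ⟨hq⟩
  induction g using Polynomial.induction_on' with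
  | add f g hf hg => rw [mul_add, map_add, hf, hg, eval_add]
  | monomial n a =>
    have hmod (i : ℕ) (hi : i < q) : ((i + n : ℕ) : ZMod q) = r ↔ i = (r - n).val := by
      rw [Nat.cast_add, ← eq_sub_iff_add_eq]
      refine ⟨fun h ↦ by rw [← h, ZMod.val_cast_of_lt hi], ?_⟩
      rintro rfl
      exact ZMod.natCast_zmod_val _
    simp only [cyclotomic_prime, Finset.sum_mul, ← monomial_one_right_eq_X_pow,
      monomial_mul_monomial, one_mul, map_sum, residueSum_monomial]
    rw [Finset.sum_congr rfl fun i hi ↦ if_congr (hmod i (Finset.mem_range.1 hi)) rfl rfl]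
    simp [ZMod.val_lt]

theorem eval_one_eq_zero_of_cyclotomic_dvd (hq : q.Prime) {P : R[X]}
    (hcard : P.support.card < q) (hdvd : cyclotomic q R ∣ P) : P.eval 1 = 0 := by
  classical
  have : Fact q.Prime := ⟨hq⟩
  obtain ⟨g, rfl⟩ := hdvd
  obtain ⟨r, -, hr⟩ : ∃ r : ZMod q, r ∈ Finset.univ ∧
      r ∉ (cyclotomic q R * g).support.image Nat.cast :=
    Finset.exists_mem_notMem_of_card_lt_card
      (Finset.card_image_le.trans_lt (by rwa [Finset.card_univ, ZMod.card]))
  have hg : g.eval 1 = 0 := by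
    rw [← residueSum_cyclotomic_mul hq r, residueSum_apply]
    refine Finset.sum_eq_zero fun n hn ↦ if_neg ?_
    rintro rfl
    exact hr (Finset.mem_image_of_mem _ hn)
  rw [eval_mul, hg, mul_zero]

end ResidueSum

section Comparison

variable {p q : ℕ} {f E D : ℤ[X]}

theorem cyclotomic_dvd_map_sub (hp : p.Prime) (hq : q.Prime) (hpq : p ≠ q)
    (hE : cyclotomic (p * q) ℤ ∣ f - E) (hD : cyclotomic q ℤ ∣ f - D) :
    cyclotomic q (ZMod p) ∣ (E - D).map (Int.castRingHom (ZMod p)) := by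
  have : Fact p.Prime := ⟨hp⟩
  have hpow : cyclotomic (q * p) (ZMod p) = cyclotomic q (ZMod p) ^ (p - 1) :=
    cyclotomic_mul_prime_eq_pow_of_not_dvd _ ((Nat.prime_dvd_prime_iff_eq hp hq).not.2 hpq)
  have hE' : cyclotomic q (ZMod p) ∣ (f - E).map (Int.castRingHom (ZMod p)) := by
    refine (dvd_pow_self _ (Nat.sub_ne_zero_of_lt hp.one_lt)).trans ?_
    rw [← hpow, mul_comm q p, ← map_cyclotomic_int]
    exact Polynomial.map_dvd _ hE
  have hD' : cyclotomic q (ZMod p) ∣ (f - D).map (Int.castRingHom (ZMod p)) :=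
    map_cyclotomic_int q (ZMod p) ▸ Polynomial.map_dvd _ hD
  rw [← sub_sub_sub_cancel_left _ _ f, Polynomial.map_sub]
  exact dvd_sub hD' hE'

theorem dvd_eval_one_sub_eval_one (hp : p.Prime) (hq : q.Prime) (hpq : p ≠ q)
    (hE : cyclotomic (p * q) ℤ ∣ f - E) (hD : cyclotomic q ℤ ∣ f - D)
    (hcard : (E - D).support.card < q) : (p : ℤ) ∣ E.eval 1 - D.eval 1 := by
  have hzero := eval_one_eq_zero_of_cyclotomic_dvd hq
    ((Finset.card_le_card (support_map_subset _ _)).trans_lt hcard)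
    (cyclotomic_dvd_map_sub hp hq hpq hE hD)
  rw [eval_one_map, eval_sub, eq_intCast] at hzero
  exact (ZMod.intCast_zmod_eq_zero_iff_dvd _ _).1 hzero

theorem prime_dvd_eval_one_of_cyclotomic_dvd (hq : q.Prime) {P : ℤ[X]}
    (h : cyclotomic q ℤ ∣ P) : (q : ℤ) ∣ P.eval 1 := by
  have : Fact q.Prime := ⟨hq⟩
  simpa using eval_dvd (x := 1) h

theorem eq_of_dvd_sub_of_abs_le_two {n : ℕ} (hn : 5 ≤ n) {a b : ℤ} (ha : |a| ≤ 2) (hb : |b| ≤ 2)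
    (h : (n : ℤ) ∣ a - b) : a = b := by
  have hlt : |a - b| < n := by linarith [abs_sub a b, (Nat.cast_le (α := ℤ)).2 hn]
  exact sub_eq_zero.1 (Int.eq_zero_of_abs_lt_dvd h hlt)

theorem eq_eval_one_of_cyclotomic_dvd_sub (hp : p.Prime) (hq : q.Prime) (hpq : p ≠ q) (hp5 : 5 ≤ p)
    (hq5 : 5 ≤ q) (hE : IsShort E) (hD : IsShort D) (hfE : cyclotomic (p * q) ℤ ∣ f - E)
    (hfD : cyclotomic q ℤ ∣ f - D) {b : ℤ} (hb : |b| ≤ 2) (hfb : (q : ℤ) ∣ f.eval 1 - b) :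
    b = E.eval 1 := by
  have hcard : (E - D).support.card < q := by
    calc (E - D).support.card ≤ (E.support ∪ (-D).support).card :=
          Finset.card_le_card (sub_eq_add_neg E D ▸ support_add)
      _ ≤ E.support.card + D.support.card := support_neg (p := D) ▸ Finset.card_union_le _ _
      _ ≤ 2 + 2 := add_le_add hE.card_support_le hD.card_support_le
      _ < q := hq5
  have hED : E.eval 1 = D.eval 1 :=
    eq_of_dvd_sub_of_abs_le_two hp5 hE.abs_eval_one_le hD.abs_eval_one_le
      (dvd_eval_one_sub_eval_one hp hq hpq hfE hfD hcard)
  have hbD : b = D.eval 1 := by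
    refine eq_of_dvd_sub_of_abs_le_two hq5 hb hD.abs_eval_one_le ?_
    rw [← sub_sub_sub_cancel_left _ _ (f.eval 1), ← eval_sub]
    exact dvd_sub (prime_dvd_eval_one_of_cyclotomic_dvd hq hfD) hfb
  exact hbD.trans hED.symm

end Comparison

theorem abs_le_two_of_mem {c : ℤ} (hc : c ∈ ({-2, -1, 0, 1, 2} : Set ℤ)) : |c| ≤ 2 := by
  rcases hc with rfl | rfl | rfl | rfl | rfl <;> decide

theorem stmt_12_general (G : Type) [Group G]
    (χ : G → ℂ) (hχ : IsGenChar G χ)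
    (d : ℤ) (hd : (d : ℂ) = χ 1)
    (p q : ℕ) (hp : p.Prime) (hq : q.Prime)
    (hp5 : 5 ≤ p) (hq5 : 5 ≤ q)
    (g : G) (hg : orderOf g = p * q)
    (hval : ∀ k : ℕ, g ^ k ≠ 1 → IsSumAtMostTwoRootsOfUnity (χ (g ^ k)))
    (a b : ℤ) (ha : a ∈ ({-2, -1, 0, 1, 2} : Set ℤ)) (hb : b ∈ ({-2, -1, 0, 1, 2} : Set ℤ))
    (hda : (p : ℤ) ∣ d - a) (hdb : (q : ℤ) ∣ d - b) :
    a = b := by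
  have ha2 := abs_le_two_of_mem ha
  have hb2 := abs_le_two_of_mem hb
  obtain rfl | hpq := eq_or_ne p q
  · exact eq_of_dvd_sub_of_abs_le_two hp5 ha2 hb2 (by simpa using dvd_sub hdb hda)
  have hodd : Odd (orderOf g) :=
    hg ▸ (hp.odd_of_ne_two (by lia)).mul (hq.odd_of_ne_two (by lia))
  obtain ⟨f, hf1, hf⟩ := hχ.exists_eval_one_eq_forall_cyclotomic_dvd_sub hodd hval
  have hfd : f.eval 1 = d := by exact_mod_cast hf1.trans hd.symm
  rw [hg] at hf
  obtain ⟨E, hE, hfE⟩ := hf (p * q) (one_lt_mul_of_lt_of_le hp.one_lt hq.one_le) dvd_rfl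
  obtain ⟨Dp, hDp, hfDp⟩ := hf p hp.one_lt (dvd_mul_right p q)
  obtain ⟨Dq, hDq, hfDq⟩ := hf q hq.one_lt (dvd_mul_left q p)
  calc a = E.eval 1 := eq_eval_one_of_cyclotomic_dvd_sub hq hp hpq.symm hq5 hp5 hE hDp
        (mul_comm p q ▸ hfE) hfDp ha2 (hfd ▸ hda)
    _ = b := (eq_eval_one_of_cyclotomic_dvd_sub hp hq hpq hp5 hq5 hE hDq hfE hfDq hb2
        (hfd ▸ hdb)).symm

theorem stmt_12 (G : Type) [Group G] [Fintype G]
    (χ : G → ℂ) (hχ : IsGenChar G χ)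
    (d : ℤ) (hd : (d : ℂ) = χ 1)
    (hval : ∀ x : G, x ≠ 1 → IsSumAtMostTwoRootsOfUnity (χ x))
    (p q : ℕ) (hp : p.Prime) (hq : q.Prime)
    (hpG : p ∣ Fintype.card G) (hqG : q ∣ Fintype.card G)
    (hp5 : 5 ≤ p) (hq5 : 5 ≤ q)
    (helt : ∃ g : G, orderOf g = p * q)
    (a b : ℤ) (ha : a ∈ ({-2, -1, 0, 1, 2} : Set ℤ)) (hb : b ∈ ({-2, -1, 0, 1, 2} : Set ℤ))
    (hda : (p : ℤ) ∣ d - a) (hdb : (q : ℤ) ∣ d - b) :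
    a = b := by
  obtain ⟨g, hg⟩ := helt
  exact stmt_12_general G χ hχ d hd p q hp hq hp5 hq5 g hg (fun k ↦ hval (g ^ k)) a b ha hb hda hdb
end
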